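/- There is a constant C > 0 such that for every finite subset F ⊂ ℤ and every 0 < λ < 1, the number of x ∈ ℤ with sup_{N ≥ 2} 𝒜_N(𝟙_F)(x) > λ is at most C λ⁻¹ log²(e/λ) · #F. -/

import Mathlib

open scoped BigOperators

/-- The set of primes `p ≤ N`. -/
def primesUpTo (N : ℕ) : Finset ℕ := (Finset.range (N + 1)).filter Nat.Prime

/-- The average along the primes `𝒜_N f(x) = (1/π(N)) Σ_{p ∈ ℙ_N} f(x + p)`. -/
noncomputable def primeAvg (f : ℤ → ℝ) (N : ℕ) (x : ℤ) : ℝ :=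
  ((primesUpTo N).card : ℝ)⁻¹ * ∑ p ∈ primesUpTo N, f (x + p)

namespace PM
open Finset

theorem weak11_aux (L : ℕ) (hL : 0 < L) (g : ℤ → ℝ) (t : ℝ) (ht : 0 ≤ t) (n : ℕ) :
    ∀ E : Finset ℤ, E.card ≤ n →
    (∀ x ∈ E, ∃ K : ℕ, t * K ≤ ∑ m ∈ range K, g (x + L * m) ∧ 0 < K) →
    ∃ Y : Finset ℤ, (∀ y ∈ Y, ∃ x ∈ E, x ≤ y ∧ (L : ℤ) ∣ y - x) ∧
      t * E.card ≤ ∑ y ∈ Y, g y := by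
  induction n with
  | zero =>
    intro E hE _
    have : E = ∅ := by simpa using hE
    subst this
    exact ⟨∅, by simp, by simp⟩
  | succ n ih =>
    intro E hE h
    rcases E.eq_empty_or_nonempty with rfl | hne
    · exact ⟨∅, by simp, by simp⟩
    set x := E.min' hne with hx
    have hxE : x ∈ E := E.min'_mem hne
    obtain ⟨K, hK, hK0⟩ := h x hxE
    have hL' : (0 : ℤ) < L := by exact_mod_cast hL
    have hinj : Set.InjOn (fun m : ℕ => x + L * (m : ℤ)) (range K) := by
      intro a _ b _ hab
      simp only at hab
      have h1 : (L : ℤ) * a = L * b := by linarith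
      have h2 := mul_left_cancel₀ hL'.ne' h1
      exact_mod_cast h2
    set Bk := (range K).image (fun m : ℕ => x + L * (m : ℤ)) with hBk
    have hBc : Bk.card = K := by rw [hBk, card_image_of_injOn hinj, card_range]
    have hxB : x ∈ Bk := by
      rw [hBk, mem_image]; exact ⟨0, by simpa using hK0, by simp⟩
    have hlt : (E \ Bk).card < E.card := by
      apply card_lt_card
      refine ⟨sdiff_subset, fun hh => ?_⟩
      have := hh hxE
      simp [hxB] at this
    obtain ⟨Y, hY, hYs⟩ := ih (E \ Bk) (by omega) (fun y hy => h y (mem_sdiff.1 hy).1)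
    have hdisj : Disjoint Y Bk := by
      rw [disjoint_left]
      intro y hy hyB
      obtain ⟨x', hx', hle, hd⟩ := hY y hy
      obtain ⟨hx'E, hx'B⟩ := mem_sdiff.1 hx'
      apply hx'B
      rw [hBk, mem_image] at hyB
      obtain ⟨m, hm, rfl⟩ := hyB
      have hmin : x ≤ x' := E.min'_le x' hx'E
      obtain ⟨c, hc⟩ := hd
      have hx'eq : x' = x + L * (m - c) := by linarith
      have hc0 : 0 ≤ c := by
        by_contra hcon
        push Not at hcon
        have : (L : ℤ) * c < 0 := mul_neg_of_pos_of_neg hL' hcon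
        linarith
      have hmc : 0 ≤ (m : ℤ) - c := by
        by_contra hcon
        push Not at hcon
        have : (L : ℤ) * (m - c) < 0 := mul_neg_of_pos_of_neg hL' hcon
        linarith
      rw [hBk, mem_image]
      refine ⟨(m - c).toNat, ?_, ?_⟩
      · simp at hm ⊢; omega
      · rw [hx'eq, Int.toNat_of_nonneg hmc]
    refine ⟨Y ∪ Bk, ?_, ?_⟩
    · intro y hy
      rcases mem_union.1 hy with hy | hy
      · obtain ⟨x', hx', h2⟩ := hY y hy
        exact ⟨x', (mem_sdiff.1 hx').1, h2⟩
      · rw [hBk, mem_image] at hy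
        obtain ⟨m, _, rfl⟩ := hy
        exact ⟨x, hxE, by nlinarith, ⟨m, by ring⟩⟩
    · rw [sum_union hdisj, hBk, sum_image hinj]
      have hcard : (E.card : ℝ) ≤ (E \ Bk).card + K := by
        have : E.card ≤ (E \ Bk).card + Bk.card := by
          rw [card_sdiff_add_card]
          have := card_le_card (subset_union_left : E ⊆ E ∪ Bk)
          omega
        rw [hBc] at this
        exact_mod_cast this
      nlinarith [mul_le_mul_of_nonneg_left hcard ht]

/-- One-sided discrete Hardy-Littlewood weak type bound along a progression. -/
theorem weak11 (L : ℕ) (hL : 0 < L) (g : ℤ → ℝ) (t : ℝ) (ht : 0 ≤ t) (E : Finset ℤ)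
    (h : ∀ x ∈ E, ∃ K : ℕ, t * K ≤ ∑ m ∈ range K, g (x + L * m) ∧ 0 < K) :
    ∃ Y : Finset ℤ, t * E.card ≤ ∑ y ∈ Y, g y := by
  obtain ⟨Y, _, hY⟩ := weak11_aux L hL g t ht E.card E le_rfl h
  exact ⟨Y, hY⟩

/-- Weak type (2,2). -/
theorem weak22 (L : ℕ) (hL : 0 < L) (g : ℤ → ℝ) (t : ℝ) (ht : 0 ≤ t) (E : Finset ℤ)
    (h : ∀ x ∈ E, ∃ K : ℕ, t * K ≤ ∑ m ∈ range K, g (x + L * m) ∧ 0 < K) :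
    ∃ Y : Finset ℤ, t ^ 2 * E.card ≤ ∑ y ∈ Y, g y ^ 2 := by
  apply weak11 L hL (fun y => g y ^ 2) (t ^ 2) (by positivity) E
  intro x hx
  obtain ⟨K, hK, hK0⟩ := h x hx
  refine ⟨K, ?_, hK0⟩
  have h1 := sq_sum_le_card_mul_sum_sq (s := range K) (f := fun m : ℕ => g (x + L * m))
  rw [card_range] at h1
  have hKr : (0 : ℝ) < K := by exact_mod_cast hK0
  have h2 : (t * K) ^ 2 ≤ (∑ m ∈ range K, g (x + L * m)) ^ 2 :=
    pow_le_pow_left₀ (by positivity) hK 2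
  have h3 : (K : ℝ) * (t ^ 2 * K) ≤ K * ∑ m ∈ range K, g (x + L * m) ^ 2 := by nlinarith
  exact le_of_mul_le_mul_left h3 hKr

noncomputable def ee (x : ℝ) : ℂ := Complex.exp (2 * Real.pi * Complex.I * x)

theorem ee_add (x y : ℝ) : ee (x + y) = ee x * ee y := by
  unfold ee; rw [← Complex.exp_add]; congr 1; push_cast; ring

theorem norm_ee (x : ℝ) : ‖ee x‖ = 1 := by
  unfold ee
  rw [show (2 * Real.pi * Complex.I * x : ℂ) = ((2 * Real.pi * x : ℝ) : ℂ) * Complex.I by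
    push_cast; ring]
  exact Complex.norm_exp_ofReal_mul_I _

theorem ee_zero : ee 0 = 1 := by simp [ee]

theorem ee_int (m : ℤ) : ee m = 1 := by
  unfold ee
  rw [Complex.exp_eq_one_iff]
  exact ⟨m, by push_cast; ring⟩

theorem ee_neg (x : ℝ) : ee (-x) = (starRingEnd ℂ) (ee x) := by
  unfold ee
  rw [← Complex.exp_conj]
  congr 1
  simp only [map_mul, Complex.conj_ofReal, Complex.conj_I, map_ofNat]
  push_cast; ring

theorem ee_nat_mul (n : ℕ) (x : ℝ) : ee (n * x) = ee x ^ n := by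
  unfold ee
  rw [← Complex.exp_nat_mul]; congr 1; push_cast; ring

theorem continuous_ee : Continuous ee := by unfold ee; fun_prop

theorem integral_ee (m : ℤ) : ∫ t in (0:ℝ)..1, ee (m * t) = if m = 0 then 1 else 0 := by
  split_ifs with h
  · subst h; simp [ee]
  · have hc : (2 * Real.pi * Complex.I * m : ℂ) ≠ 0 := by
      simp [Real.pi_ne_zero, h]
    have : ∀ t : ℝ, ee (m * t) = Complex.exp ((2 * Real.pi * Complex.I * m : ℂ) * t) := by
      intro t; unfold ee; congr 1; push_cast; ring
    simp_rw [this]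
    rw [integral_exp_mul_complex hc]
    have h1 := ee_int m
    unfold ee at h1
    push_cast at h1
    simp [h1]

theorem parseval (Y : Finset ℤ) (c : ℤ → ℝ) :
    ∫ t in (0:ℝ)..1, ‖∑ y ∈ Y, (c y : ℂ) * ee (y * t)‖ ^ 2 = ∑ y ∈ Y, c y ^ 2 := by
  have key : ∀ t : ℝ, (((‖∑ y ∈ Y, (c y : ℂ) * ee (y * t)‖ ^ 2 : ℝ)) : ℂ)
      = ∑ y ∈ Y, ∑ y' ∈ Y, ((c y * c y' : ℝ) : ℂ) * ee (((y - y' : ℤ) : ℝ) * t) := by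
    intro t
    rw [← Complex.normSq_eq_norm_sq, ← Complex.mul_conj, map_sum, sum_mul_sum]
    refine sum_congr rfl fun y _ => sum_congr rfl fun y' _ => ?_
    rw [map_mul, ← ee_neg, Complex.conj_ofReal]
    rw [show (((y - y' : ℤ) : ℝ) * t) = y * t + -(y' * t) by push_cast; ring, ee_add]
    push_cast; ring
  have h2 : ((∫ t in (0:ℝ)..1, ‖∑ y ∈ Y, (c y : ℂ) * ee (y * t)‖ ^ 2 : ℝ) : ℂ)
      = ((∑ y ∈ Y, c y ^ 2 : ℝ) : ℂ) := by
    rw [← intervalIntegral.integral_ofReal]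
    simp_rw [key]
    have hinteg : ∀ y y' : ℤ, IntervalIntegrable
        (fun t : ℝ => ((c y * c y' : ℝ) : ℂ) * ee (((y - y' : ℤ) : ℝ) * t))
        MeasureTheory.volume 0 1 := by
      intro y y'
      apply Continuous.intervalIntegrable
      have := continuous_ee
      fun_prop
    rw [intervalIntegral.integral_finsetSum]
    · push_cast
      refine sum_congr rfl fun y hy => ?_
      rw [intervalIntegral.integral_finsetSum (fun y' _ => by simpa using hinteg y y')]
      have : ∀ y' ∈ Y, (∫ t in (0:ℝ)..1, ((c y : ℂ) * (c y' : ℂ)) * ee (((y : ℝ) - (y':ℝ)) * t))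
          = if y = y' then ((c y : ℂ)) ^ 2 else 0 := by
        intro y' _
        have h3 := integral_ee (y - y')
        push_cast at h3
        rw [intervalIntegral.integral_const_mul, h3]
        by_cases hyy : y = y'
        · subst hyy; simp; ring
        · have : y - y' ≠ 0 := sub_ne_zero.2 hyy
          simp [hyy, this]
      rw [sum_congr rfl this]
      simp [hy]
    · intro y hy
      apply Continuous.intervalIntegrable
      have := continuous_ee
      fun_prop
  exact_mod_cast h2

/-- The correlation operator. -/
noncomputable def conv (N : ℕ) (K : ℕ → ℝ) (f : ℤ → ℝ) (x : ℤ) : ℝ :=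
  ∑ n ∈ range N, K n * f (x + n)

theorem l2_bound (N : ℕ) (K : ℕ → ℝ) (B : ℝ)
    (hB : ∀ ξ : ℝ, ‖∑ n ∈ range N, (K n : ℂ) * ee (n * ξ)‖ ≤ B)
    (F : Finset ℤ) (Y : Finset ℤ) :
    ∑ y ∈ Y, conv N K ((F : Set ℤ).indicator 1) y ^ 2 ≤ B ^ 2 * F.card := by
  classical
  set h := conv N K ((F : Set ℤ).indicator 1) with hh
  set Y0 : Finset ℤ := (F ×ˢ range N).image (fun zn => zn.1 - (zn.2 : ℤ)) with hY0
  have hzero : ∀ y, y ∉ Y0 → h y = 0 := by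
    intro y hy
    rw [hh]; unfold conv
    apply sum_eq_zero
    intro n hn
    have : y + n ∉ (F : Set ℤ) := by
      intro hF
      apply hy
      rw [hY0, mem_image]
      exact ⟨(y + n, n), by simp only [mem_product]; exact ⟨by exact_mod_cast hF, hn⟩, by simp⟩
    simp [Set.indicator_of_notMem this]
  have h1 : ∑ y ∈ Y, h y ^ 2 ≤ ∑ y ∈ Y0, h y ^ 2 := by
    calc ∑ y ∈ Y, h y ^ 2 ≤ ∑ y ∈ Y ∪ Y0, h y ^ 2 :=
          sum_le_sum_of_subset_of_nonneg subset_union_left (fun _ _ _ => sq_nonneg _)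
      _ = ∑ y ∈ Y0, h y ^ 2 := by
          symm
          apply sum_subset subset_union_right
          intro y _ hy
          rw [hzero y hy]; simp
  refine h1.trans ?_
  rw [← parseval Y0 h]
  have hfac : ∀ t : ℝ, ∑ y ∈ Y0, (h y : ℂ) * ee (y * t)
      = (∑ n ∈ range N, (K n : ℂ) * ee (n * (-t))) * ∑ z ∈ F, ((1 : ℝ) : ℂ) * ee (z * t) := by
    intro t
    rw [hh]; unfold conv
    push_cast
    simp_rw [sum_mul]
    rw [sum_comm]
    refine sum_congr rfl fun n hn => ?_
    have hsub : F.image (fun z => z - (n : ℤ)) ⊆ Y0 := by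
      intro y hy
      obtain ⟨z, hz, rfl⟩ := mem_image.1 hy
      rw [hY0, mem_image]
      exact ⟨(z, n), by simp only [mem_product]; exact ⟨hz, hn⟩, rfl⟩
    rw [← sum_subset hsub]
    · rw [sum_image (by intro a _ b _ hab; simpa using hab), mul_sum]
      refine sum_congr rfl fun z hz => ?_
      have hz' : z - (n : ℤ) + n ∈ (F : Set ℤ) := by simpa using hz
      rw [Set.indicator_of_mem hz']
      rw [show (((z - (n : ℤ) : ℤ) : ℝ) * t) = n * (-t) + z * t by push_cast; ring, ee_add]
      simp; ring
    · intro y _ hy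
      have : y + n ∉ (F : Set ℤ) := by
        intro hF
        apply hy
        rw [mem_image]
        exact ⟨y + n, by exact_mod_cast hF, by simp⟩
      simp [Set.indicator_of_notMem this]
  have h2 := parseval F (fun _ => 1)
  simp only [one_pow, sum_const, nsmul_eq_mul, mul_one] at h2
  rw [← h2, ← intervalIntegral.integral_const_mul]
  have hce := continuous_ee
  apply intervalIntegral.integral_mono_on (by norm_num)
  · apply Continuous.intervalIntegrable; fun_prop
  · apply Continuous.intervalIntegrable; fun_prop
  · intro t _
    rw [hfac, norm_mul, mul_pow]
    apply mul_le_mul_of_nonneg_right _ (by positivity)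
    exact pow_le_pow_left₀ (norm_nonneg _) (hB (-t)) 2

end PM

namespace PM
open Finset

/-- Indicator of divisibility. -/
noncomputable def dv (d : ℕ) : ℕ → ℝ := fun n => if d ∣ n then 1 else 0

/-- Functions of level `D`, with period dividing `M`. -/
noncomputable def Lev (M D : ℕ) : Submodule ℝ (ℕ → ℝ) :=
  Submodule.span ℝ {φ | ∃ d, d ∣ M ∧ 0 < d ∧ d ≤ D ∧ φ = dv d}

theorem dv_mem (M D d : ℕ) (h1 : d ∣ M) (h2 : 0 < d) (h3 : d ≤ D) : dv d ∈ Lev M D :=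
  Submodule.subset_span ⟨d, h1, h2, h3, rfl⟩

theorem lev_mono {M D D' : ℕ} (h : D ≤ D') : Lev M D ≤ Lev M D' := by
  apply Submodule.span_mono
  rintro φ ⟨d, h1, h2, h3, rfl⟩
  exact ⟨d, h1, h2, h3.trans h, rfl⟩

theorem dv_mul (d e : ℕ) : dv d * dv e = dv (Nat.lcm d e) := by
  funext n
  simp only [dv, Pi.mul_apply, Nat.lcm_dvd_iff]
  by_cases h1 : d ∣ n <;> by_cases h2 : e ∣ n <;> simp [h1, h2]

theorem lev_mul {M D D' : ℕ} {φ ψ : ℕ → ℝ} (h1 : φ ∈ Lev M D) (h2 : ψ ∈ Lev M D') :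
    φ * ψ ∈ Lev M (D * D') := by
  induction h1 using Submodule.span_induction with
  | mem x hx =>
    obtain ⟨d, hd1, hd2, hd3, rfl⟩ := hx
    induction h2 using Submodule.span_induction with
    | mem y hy =>
      obtain ⟨e, he1, he2, he3, rfl⟩ := hy
      rw [dv_mul]
      apply dv_mem
      · exact Nat.lcm_dvd hd1 he1
      · exact Nat.lcm_pos hd2 he2
      · calc Nat.lcm d e ≤ d * e := Nat.le_of_dvd (by positivity) (Nat.lcm_dvd_mul d e)
          _ ≤ D * D' := Nat.mul_le_mul hd3 he3
    | zero => simp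
    | add x y _ _ hx hy => rw [mul_add]; exact Submodule.add_mem _ hx hy
    | smul a x _ hx => rw [mul_smul_comm]; exact Submodule.smul_mem _ _ hx
  | zero => simp
  | add x y _ _ hx hy => rw [add_mul]; exact Submodule.add_mem _ hx hy
  | smul a x _ hx => rw [smul_mul_assoc]; exact Submodule.smul_mem _ _ hx

theorem lev_periodic {M D : ℕ} {φ : ℕ → ℝ} (h1 : φ ∈ Lev M D) (n : ℕ) : φ (n + M) = φ n := by
  induction h1 using Submodule.span_induction with
  | mem x hx =>
    obtain ⟨d, hd1, hd2, hd3, rfl⟩ := hx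
    simp [dv, Nat.dvd_add_left hd1]
  | zero => simp
  | add x y _ _ hx hy => simp [hx, hy]
  | smul a x _ hx => simp [hx]

theorem sum_dvd {α : Type*} [AddCommMonoid α] (d M : ℕ) (hd : 0 < d) (φ : ℕ → α) :
    ∑ n ∈ range (d * M), (if d ∣ n then φ n else 0) = ∑ m ∈ range M, φ (d * m) := by
  rw [← sum_filter]
  symm
  apply sum_nbij' (fun m => d * m) (fun n => n / d)
  · intro m hm
    simp only [mem_filter, mem_range] at hm ⊢
    exact ⟨Nat.mul_lt_mul_of_pos_left hm hd, dvd_mul_right _ _⟩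
  · intro n hn
    simp only [mem_filter, mem_range] at hn ⊢
    exact Nat.div_lt_of_lt_mul hn.1
  · intro m _; exact Nat.mul_div_cancel_left m hd
  · intro n hn
    simp only [mem_filter, mem_range] at hn
    exact Nat.mul_div_cancel' hn.2
  · intro m _; rfl

theorem geom_zero (ω : ℂ) (M : ℕ) (h1 : ω ^ M = 1) (h2 : ω ≠ 1) :
    ∑ n ∈ range M, ω ^ n = 0 := by
  have := geom_sum_mul ω M
  rw [h1, sub_self] at this
  exact (mul_eq_zero.1 this).resolve_right (sub_ne_zero.2 h2)

theorem lev_coef_zero {M D : ℕ} {φ : ℕ → ℝ} (h1 : φ ∈ Lev M D) (ω : ℂ) (hω : ω ^ M = 1)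
    (h : ∀ d, d ∣ M → 0 < d → d ≤ D → ω ^ d ≠ 1) : ∑ n ∈ range M, (φ n : ℂ) * ω ^ n = 0 := by
  induction h1 using Submodule.span_induction with
  | mem x hx =>
    obtain ⟨d, hd1, hd2, hd3, rfl⟩ := hx
    obtain ⟨M', rfl⟩ := hd1
    have : ∀ n ∈ range (d * M'), ((dv d n : ℝ) : ℂ) * ω ^ n = if d ∣ n then ω ^ n else 0 := by
      intro n _; unfold dv; split_ifs <;> simp
    rw [sum_congr rfl this, sum_dvd d M' hd2]
    simp_rw [pow_mul]
    exact geom_zero _ _ (by rw [← pow_mul, hω]) (h d (dvd_mul_right _ _) hd2 hd3)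
  | zero => simp
  | add x y _ _ hx hy =>
    simp only [Pi.add_apply, Complex.ofReal_add, add_mul, sum_add_distrib, hx, hy, add_zero]
  | smul a x _ hx =>
    simp only [Pi.smul_apply, smul_eq_mul, Complex.ofReal_mul, mul_assoc]
    rw [← mul_sum, hx, mul_zero]

theorem ee_eq_one (x : ℝ) : ee x = 1 ↔ ∃ n : ℤ, x = n := by
  unfold ee
  rw [Complex.exp_eq_one_iff]
  constructor
  · rintro ⟨n, hn⟩
    refine ⟨n, ?_⟩
    have h2 : (2 * Real.pi * Complex.I : ℂ) ≠ 0 := by simp [Real.pi_ne_zero]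
    have h3 : (2 * Real.pi * Complex.I : ℂ) * x = (2 * Real.pi * Complex.I : ℂ) * n := by
      rw [hn]; ring
    have := mul_left_cancel₀ h2 h3
    exact_mod_cast this
  · rintro ⟨n, rfl⟩
    exact ⟨n, by push_cast; ring⟩

theorem chord_lower (x : ℝ) (hx : |x| ≤ 1 / 2) : 4 * |x| ≤ ‖ee x - 1‖ := by
  have h1 : ee x = Complex.exp (Complex.I * ((2 * Real.pi * x : ℝ) : ℂ)) := by
    unfold ee; congr 1; push_cast; ring
  rw [h1, Complex.norm_exp_I_mul_ofReal_sub_one]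
  rw [show 2 * Real.pi * x / 2 = Real.pi * x by ring, norm_mul, Real.norm_eq_abs, Real.norm_eq_abs]
  have h2 : |Real.sin (Real.pi * x)| = Real.sin (Real.pi * |x|) := by
    rcases abs_cases x with ⟨h, h'⟩ | ⟨h, h'⟩
    · rw [h, abs_of_nonneg]
      apply Real.sin_nonneg_of_nonneg_of_le_pi (by positivity)
      nlinarith [Real.pi_pos]
    · rw [h, mul_neg, Real.sin_neg, abs_of_nonpos]
      have : 0 ≤ Real.sin (Real.pi * (-x)) := by
        apply Real.sin_nonneg_of_nonneg_of_le_pi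
        · exact mul_nonneg Real.pi_pos.le (by linarith)
        · nlinarith [Real.pi_pos]
      rw [mul_neg, Real.sin_neg] at this
      linarith
  rw [h2]
  have h3 := Real.mul_le_sin (x := Real.pi * |x|) (by positivity) (by nlinarith [Real.pi_pos])
  have h4 : 2 / Real.pi * (Real.pi * |x|) = 2 * |x| := by field_simp
  rw [h4] at h3
  rw [abs_of_pos (by norm_num : (0:ℝ) < 2)]
  linarith

theorem chord_rat (a : ℤ) (q : ℕ) (hq : 0 < q) (h : ¬ (q : ℤ) ∣ a) :
    4 / (q : ℝ) ≤ ‖ee (a / q) - 1‖ := by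
  set x : ℝ := a / q with hx
  have hq' : (0 : ℝ) < q := by exact_mod_cast hq
  have h1 : ee x = ee (x - round x) := by
    have : x = (x - round x) + (round x : ℤ) := by ring
    conv_lhs => rw [this]
    rw [ee_add, ee_int, mul_one]
  rw [h1]
  refine le_trans ?_ (chord_lower _ (abs_sub_round x))
  have h2 : x - round x = ((a - q * round x : ℤ) : ℝ) / q := by
    rw [hx]; push_cast; field_simp
  have h3 : a - q * round x ≠ 0 := by
    intro h0
    exact h ⟨round x, by linarith⟩
  have h4 : (1 : ℝ) ≤ |((a - q * round x : ℤ) : ℝ)| := by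
    rw [← Int.cast_abs]
    exact_mod_cast Int.one_le_abs h3
  rw [h2, abs_div, abs_of_pos hq']
  rw [← mul_div_assoc]
  gcongr
  linarith

theorem inversion (M : ℕ) (hM : 0 < M) (φ : ℕ → ℝ) (hφ : ∀ n, φ (n + M) = φ n) (n : ℕ) :
    (M : ℂ) * φ n = ∑ b ∈ range M, (∑ m ∈ range M, (φ m : ℂ) * ee (-(b / M : ℝ)) ^ m) *
      ee (n * (b / M : ℝ)) := by
  have hM' : (M : ℝ) ≠ 0 := by positivity
  have h1 : ∀ m : ℕ, ∑ b ∈ range M, ee (-(b / M : ℝ)) ^ m * ee (n * (b / M : ℝ))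
      = if n % M = m % M then (M : ℂ) else 0 := by
    intro m
    have h2 : ∀ b : ℕ, ee (-(b / M : ℝ)) ^ m * ee (n * (b / M : ℝ))
        = ee (((n : ℤ) - m : ℤ) / M) ^ b := by
      intro b
      rw [← ee_nat_mul, ← ee_nat_mul, ← ee_add]
      congr 1
      push_cast
      field_simp
      ring
    simp_rw [h2]
    split_ifs with h
    · have h3 : (M : ℤ) ∣ (n : ℤ) - m := by
        have := (Nat.modEq_iff_dvd (n := M) (a := m) (b := n)).1 h.symm
        exact this
      obtain ⟨c, hc⟩ := h3
      have : ee (((n : ℤ) - m : ℤ) / M) = 1 := by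
        rw [ee_eq_one]
        refine ⟨c, ?_⟩
        rw [hc]; push_cast; field_simp
      rw [this]; simp
    · apply geom_zero
      · rw [← ee_nat_mul, ee_eq_one]
        exact ⟨(n : ℤ) - m, by field_simp⟩
      · rw [Ne, ee_eq_one]
        rintro ⟨c, hc⟩
        apply h
        symm
        apply (Nat.modEq_iff_dvd (n := M) (a := m) (b := n)).2
        refine ⟨c, ?_⟩
        rw [div_eq_iff hM'] at hc
        have h5 : (((n : ℤ) - m : ℤ) : ℝ) = ((M * c : ℤ) : ℝ) := by rw [hc]; push_cast; ring
        exact_mod_cast h5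
  simp_rw [sum_mul, mul_assoc]
  rw [sum_comm]
  simp_rw [← mul_sum, h1]
  rw [sum_eq_single (n % M)]
  · have h4 : φ (n % M) = φ n := by
      have : Function.Periodic φ M := hφ
      exact this.map_mod_nat n
    simp [h4, mul_comm]
  · intro m hm hne
    have : m % M = m := Nat.mod_eq_of_lt (mem_range.1 hm)
    rw [this, if_neg (Ne.symm hne), mul_zero]
  · intro h; exact absurd (mem_range.2 (Nat.mod_lt n hM)) h

theorem kernel_le (α : ℝ) (N : ℕ) : ‖∑ n ∈ range N, ee (n * α)‖ ≤ N := by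
  refine (norm_sum_le _ _).trans ?_
  simp [norm_ee]

theorem kernel_le2 (α c : ℝ) (hc : 0 < c) (h : c ≤ ‖ee α - 1‖) (N : ℕ) :
    ‖∑ n ∈ range N, ee (n * α)‖ ≤ 2 / c := by
  simp_rw [ee_nat_mul]
  have h1 := geom_sum_mul (ee α) N
  have h2 : ‖∑ n ∈ range N, ee α ^ n‖ * ‖ee α - 1‖ ≤ 2 := by
    rw [← norm_mul, h1]
    refine (norm_sub_le _ _).trans ?_
    rw [norm_pow, norm_ee]; norm_num
  rw [le_div_iff₀ hc]
  exact (mul_le_mul_of_nonneg_left h (norm_nonneg _)).trans h2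

theorem trig_bound (M D N : ℕ) (hM : 0 < M) (hD : 0 < D) (φ : ℕ → ℝ) (hφ : φ ∈ Lev M D)
    (hN : D ^ 4 ≤ N) (B : ℝ) (hB0 : 0 ≤ B)
    (hB : ∀ ω : ℂ, ω ^ M = 1 → ‖∑ n ∈ range M, (φ n : ℂ) * ω ^ n‖ ≤ B * M) (ξ : ℝ) :
    ‖∑ n ∈ range N, (φ n : ℂ) * ee (n * ξ)‖ ≤ 2 * B * N := by
  classical
  have hMr : (0 : ℝ) < M := by exact_mod_cast hM
  have hDr : (0 : ℝ) < D := by exact_mod_cast hD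
  set C : ℕ → ℂ := fun b => ∑ m ∈ range M, (φ m : ℂ) * ee (-(b / M : ℝ)) ^ m with hC
  have hroot : ∀ b : ℕ, ee (-(b / M : ℝ)) ^ M = 1 := by
    intro b
    rw [← ee_nat_mul, ee_eq_one]
    exact ⟨-b, by push_cast; field_simp⟩
  set I := (range M).filter (fun b => C b ≠ 0) with hI
  -- structure of I
  have hIs : ∀ b ∈ I, ∃ d t : ℕ, 0 < d ∧ d ≤ D ∧ t < d ∧ b * d = M * t := by
    intro b hb
    rw [hI, mem_filter, mem_range] at hb
    by_contra hcon
    push Not at hcon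
    apply hb.2
    apply lev_coef_zero hφ _ (hroot b)
    intro d hd1 hd2 hd3 hd4
    rw [← ee_nat_mul, ee_eq_one] at hd4
    obtain ⟨n, hn⟩ := hd4
    have h1 : ((b * d : ℕ) : ℤ) = M * (-n) := by
      have : (b : ℝ) * d = M * (-n) := by
        field_simp at hn
        linarith
      exact_mod_cast this
    have h2 : 0 ≤ -n := by
      by_contra hneg
      push Not at hneg
      have : (M : ℤ) * (-n) < 0 := mul_neg_of_pos_of_neg (by exact_mod_cast hM) hneg
      have h3 : (0 : ℤ) ≤ ((b * d : ℕ) : ℤ) := Int.natCast_nonneg _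
      omega
    obtain ⟨t, ht⟩ := Int.eq_ofNat_of_zero_le h2
    rw [ht] at h1
    have h3 : b * d = M * t := by exact_mod_cast h1
    refine hcon d t hd2 hd3 ?_ h3
    by_contra hle
    push Not at hle
    have h4 : b * d < M * d := Nat.mul_lt_mul_of_pos_right hb.1 hd2
    have h5 : M * d ≤ M * t := Nat.mul_le_mul_left _ hle
    omega
  choose! dd tt hd0 hdD htd hbd using hIs
  have hcard : (I.card : ℝ) ≤ (D : ℝ) ^ 2 := by
    have : I.card ≤ ((Icc 1 D) ×ˢ (range D)).card := by
      apply card_le_card_of_injOn (fun b => (dd b, tt b))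
      · intro b hb
        simp only [coe_product, Set.mem_prod, mem_coe, mem_Icc, mem_range]
        exact ⟨⟨hd0 b hb, hdD b hb⟩, lt_of_lt_of_le (htd b hb) (hdD b hb)⟩
      · intro b hb b' hb' h
        simp only [Prod.mk.injEq] at h
        have h1 := hbd b hb
        have h2 := hbd b' hb'
        rw [h.1, h.2] at h1
        exact Nat.eq_of_mul_eq_mul_right (hd0 b' hb') (h1.trans h2.symm)
    rw [card_product, Nat.card_Icc, card_range] at this
    have h2 : I.card ≤ D ^ 2 := by rw [sq]; simpa using this
    exact_mod_cast h2
  have hfrac : ∀ b ∈ I, (b / M : ℝ) = tt b / dd b := by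
    intro b hb
    have h1 : (0 : ℝ) < dd b := by exact_mod_cast hd0 b hb
    rw [div_eq_div_iff hMr.ne' h1.ne']
    have := hbd b hb
    have h2 : ((b * dd b : ℕ) : ℝ) = ((M * tt b : ℕ) : ℝ) := by rw [this]
    push_cast at h2
    linarith
  -- separation
  have hsep : ∀ b ∈ I, ∀ b' ∈ I, b ≠ b' → 4 / (D : ℝ) ^ 2 ≤ ‖ee (b / M) - ee (b' / M)‖ := by
    intro b hb b' hb' hne
    have h1 : (0 : ℝ) < dd b := by exact_mod_cast hd0 b hb
    have h1' : (0 : ℝ) < dd b' := by exact_mod_cast hd0 b' hb'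
    set a : ℤ := tt b * dd b' - tt b' * dd b with ha
    have h2 : (b / M : ℝ) = (a : ℝ) / ((dd b * dd b' : ℕ) : ℝ) + (b' / M : ℝ) := by
      rw [hfrac b hb, hfrac b' hb', ha]
      push_cast
      field_simp
      ring
    have h3 : ee (b / M) - ee (b' / M) =
        (ee ((a : ℝ) / ((dd b * dd b' : ℕ) : ℝ)) - 1) * ee (b' / M) := by
      conv_lhs => rw [h2, ee_add]
      ring
    rw [h3, norm_mul, norm_ee, mul_one]
    have h4 : ¬ ((dd b * dd b' : ℕ) : ℤ) ∣ a := by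
      rintro ⟨c, hc⟩
      have h5 : (a : ℝ) / ((dd b * dd b' : ℕ) : ℝ) = c := by
        rw [hc]; push_cast; field_simp
      rw [h5] at h2
      have hbM : b < M := mem_range.1 (mem_filter.1 hb).1
      have hbM' : b' < M := mem_range.1 (mem_filter.1 hb').1
      have h6 : (b : ℝ) = M * c + b' := by field_simp at h2; linarith
      have h7 : (b : ℤ) = M * c + b' := by exact_mod_cast h6
      have h8 : c = 0 := by
        by_contra hc0
        rcases lt_or_gt_of_ne hc0 with h9 | h9
        · have : (M : ℤ) * c ≤ M * (-1) := mul_le_mul_of_nonneg_left (by omega) (by omega)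
          omega
        · have : (M : ℤ) * 1 ≤ M * c := mul_le_mul_of_nonneg_left (by omega) (by omega)
          omega
      rw [h8] at h7
      apply hne
      omega
    refine le_trans ?_ (chord_rat a _ (Nat.mul_pos (hd0 b hb) (hd0 b' hb')) h4)
    have h9 : ((dd b * dd b' : ℕ) : ℝ) ≤ (D : ℝ) ^ 2 := by
      have : dd b * dd b' ≤ D * D := Nat.mul_le_mul (hdD b hb) (hdD b' hb')
      rw [sq]; exact_mod_cast this
    have h10 : (0 : ℝ) < ((dd b * dd b' : ℕ) : ℝ) := by push_cast; positivity
    gcongr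
  set κ : ℕ → ℝ := fun b => ‖∑ n ∈ range N, ee (n * (b / M + ξ))‖ with hκ
  set I1 := I.filter (fun b : ℕ => ‖ee (b / M) - ee (-ξ)‖ < 2 / (D : ℝ) ^ 2) with hI1
  have hI1c : I1.card ≤ 1 := by
    rw [card_le_one]
    intro b hb b' hb'
    by_contra hne
    rw [hI1, mem_filter] at hb hb'
    have h1 := hsep b hb.1 b' hb'.1 hne
    have h2 : ‖ee (b / M) - ee (b' / M)‖ ≤ ‖ee (b / M) - ee (-ξ)‖ + ‖ee (b' / M) - ee (-ξ)‖ := by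
      rw [norm_sub_rev (ee (b' / M))]
      exact norm_sub_le_norm_sub_add_norm_sub _ _ _
    have h3 : 4 / (D : ℝ) ^ 2 = 2 / (D : ℝ) ^ 2 + 2 / (D : ℝ) ^ 2 := by ring
    linarith [hb.2, hb'.2]
  have hκ2 : ∀ b ∈ I, b ∉ I1 → κ b ≤ (D : ℝ) ^ 2 := by
    intro b hb hb1
    have h1 : 2 / (D : ℝ) ^ 2 ≤ ‖ee (b / M) - ee (-ξ)‖ := by
      by_contra hcon
      push Not at hcon
      exact hb1 (mem_filter.2 ⟨hb, hcon⟩)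
    have h2 : ‖ee (b / M) - ee (-ξ)‖ = ‖ee (b / M + ξ) - 1‖ := by
      have : ee (b / M) - ee (-ξ) = (ee (b / M + ξ) - 1) * ee (-ξ) := by
        rw [sub_mul, ← ee_add, one_mul]; congr 2; ring
      rw [this, norm_mul, norm_ee, mul_one]
    rw [h2] at h1
    have h3 := kernel_le2 _ _ (by positivity) h1 N
    refine h3.trans (le_of_eq ?_)
    field_simp
  have hsumκ : ∑ b ∈ I, κ b ≤ 2 * N := by
    rw [← sum_filter_add_sum_filter_not I (fun b => b ∈ I1)]
    have h1 : ∑ b ∈ I with b ∈ I1, κ b ≤ N := by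
      calc ∑ b ∈ I with b ∈ I1, κ b ≤ ∑ b ∈ I with b ∈ I1, (N : ℝ) :=
            sum_le_sum (fun b _ => kernel_le _ _)
        _ = ((I.filter (fun b => b ∈ I1)).card : ℝ) * N := by simp
        _ ≤ 1 * N := by
            gcongr
            have : (I.filter (fun b => b ∈ I1)).card ≤ I1.card := by
              apply card_le_card
              intro b hb
              exact (mem_filter.1 hb).2
            exact_mod_cast this.trans hI1c
        _ = N := one_mul _
    have h2 : ∑ b ∈ I with b ∉ I1, κ b ≤ N := by
      calc ∑ b ∈ I with b ∉ I1, κ b ≤ ∑ b ∈ I with b ∉ I1, (D : ℝ) ^ 2 :=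
            sum_le_sum (fun b hb => hκ2 b (mem_filter.1 hb).1 (mem_filter.1 hb).2)
        _ = ((I.filter (fun b => b ∉ I1)).card : ℝ) * (D : ℝ) ^ 2 := by simp
        _ ≤ (D : ℝ) ^ 2 * (D : ℝ) ^ 2 := by
            gcongr
            refine le_trans ?_ hcard
            exact_mod_cast card_le_card (filter_subset _ _)
        _ = (D : ℝ) ^ 4 := by ring
        _ ≤ N := by exact_mod_cast hN
    linarith
  have hmain : (M : ℂ) * ∑ n ∈ range N, (φ n : ℂ) * ee (n * ξ)
      = ∑ b ∈ I, C b * ∑ n ∈ range N, ee (n * (b / M + ξ)) := by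
    have h1 : ∀ n, (M : ℂ) * φ n = ∑ b ∈ I, C b * ee (n * (b / M : ℝ)) := by
      intro n
      rw [inversion M hM φ (lev_periodic hφ) n, hI, sum_filter]
      refine sum_congr rfl fun b _ => ?_
      by_cases h : C b = 0
      · simp only [h, ne_eq, not_true_eq_false, if_false]
        rw [hC] at h
        simp only at h
        rw [h, zero_mul]
      · simp only [ne_eq, h, not_false_eq_true, if_true]
        rfl
    rw [mul_sum]
    simp_rw [← mul_assoc, h1, sum_mul, mul_sum]
    rw [sum_comm]
    refine sum_congr rfl fun b _ => sum_congr rfl fun n _ => ?_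
    rw [mul_add, ee_add]; ring
  have hfin : (M : ℝ) * ‖∑ n ∈ range N, (φ n : ℂ) * ee (n * ξ)‖ ≤ M * (2 * B * N) := by
    calc (M : ℝ) * ‖∑ n ∈ range N, (φ n : ℂ) * ee (n * ξ)‖
        = ‖(M : ℂ) * ∑ n ∈ range N, (φ n : ℂ) * ee (n * ξ)‖ := by
          rw [norm_mul]; simp
      _ ≤ ∑ b ∈ I, ‖C b * ∑ n ∈ range N, ee (n * (b / M + ξ))‖ := by
          rw [hmain]; exact norm_sum_le _ _
      _ ≤ ∑ b ∈ I, (B * M) * κ b := by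
          apply sum_le_sum
          intro b _
          rw [norm_mul]
          exact mul_le_mul_of_nonneg_right (hB _ (hroot b)) (norm_nonneg _)
      _ = (B * M) * ∑ b ∈ I, κ b := by rw [mul_sum]
      _ ≤ (B * M) * (2 * N) := by
          apply mul_le_mul_of_nonneg_left hsumκ (by positivity)
      _ = M * (2 * B * N) := by ring
  exact le_of_mul_le_mul_left hfin hMr

end PM

namespace PM
open Finset

theorem sum_shift {α : Type*} [AddCommGroup α] (M : ℕ) (φ : ℕ → α) (hφ : ∀ n, φ (n + M) = φ n)
    (u : ℕ) : ∑ n ∈ range M, φ (n + u) = ∑ n ∈ range M, φ n := by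
  induction u with
  | zero => simp
  | succ u ih =>
    rw [← ih]
    have h1 := sum_range_succ (fun n => φ (n + u)) M
    have h2 := sum_range_succ' (fun n => φ (n + u)) M
    rw [h1] at h2
    have h3 : φ (M + u) = φ (0 + u) := by rw [zero_add, add_comm, hφ]
    rw [h3] at h2
    have h4 := add_right_cancel h2
    rw [h4]
    refine sum_congr rfl fun n _ => ?_
    congr 1; ring

theorem orbit1 (M u : ℕ) (F : ℕ → ℝ) (hFM : ∀ n, F (n + M) = F n) (hF : ∀ n, F (n + u) = F n)
    (ω : ℂ) (hω : ω ^ M = 1) (hωu : ω ^ u ≠ 1) : ∑ n ∈ range M, (F n : ℂ) * ω ^ n = 0 := by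
  have h1 := sum_shift M (fun n => (F n : ℂ) * ω ^ n)
    (by intro n; simp only [hFM, pow_add, hω, mul_one]) u
  simp only [hF, pow_add] at h1
  have h2 : ω ^ u * ∑ n ∈ range M, (F n : ℂ) * ω ^ n = ∑ n ∈ range M, (F n : ℂ) * ω ^ n := by
    have h3 : ∀ n ∈ range M, ω ^ u * ((F n : ℂ) * ω ^ n) = (F n : ℂ) * (ω ^ n * ω ^ u) := by
      intro n _; ring
    rw [mul_sum, sum_congr rfl h3, h1]
  have h3 : (ω ^ u - 1) * ∑ n ∈ range M, (F n : ℂ) * ω ^ n = 0 := by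
    rw [sub_mul, h2, one_mul, sub_self]
  exact (mul_eq_zero.1 h3).resolve_left (sub_ne_zero.2 hωu)

theorem mul_periodic (u : ℕ) (F : ℕ → ℝ) (hF : ∀ n, F (n + u) = F n) (p n : ℕ) :
    F (n + p * u) = F n := by
  induction p with
  | zero => simp
  | succ p ih => rw [← ih, show n + (p + 1) * u = n + p * u + u by ring, hF]

theorem orbit2 (p u : ℕ) (hp : 0 < p) (hu : 0 < u) (hc : p.Coprime u) (F : ℕ → ℝ)
    (hF : ∀ n, F (n + u) = F n) :
    (p : ℝ) * ∑ n ∈ range (p * u), dv p n * F n = ∑ n ∈ range (p * u), F n := by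
  have h1 : ∀ n ∈ range (p * u), dv p n * F n = if p ∣ n then F n else 0 := by
    intro n _; unfold dv; split_ifs <;> simp
  rw [sum_congr rfl h1, sum_dvd p u hp]
  have hper : Function.Periodic F u := hF
  have h2 : ∑ m ∈ range u, F (p * m) = ∑ m ∈ range u, F m := by
    have hmaps : Set.MapsTo (fun m => (p * m) % u) (range u) (range u) := by
      intro m _
      simpa using Nat.mod_lt _ hu
    have hinj : Set.InjOn (fun m => (p * m) % u) (range u) := by
      intro a ha b hb hab
      have h3 : p * a ≡ p * b [MOD u] := hab
      have h4 : a ≡ b [MOD u] := Nat.ModEq.cancel_left_of_coprime (by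
        rw [Nat.gcd_comm]; exact hc) h3
      simp only [coe_range, Set.mem_Iio] at ha hb
      exact Nat.ModEq.eq_of_lt_of_lt h4 ha hb
    have hsurj := Finset.surjOn_of_injOn_of_card_le _ hmaps hinj le_rfl
    refine sum_nbij (fun m => (p * m) % u) hmaps hinj hsurj ?_
    intro m _
    exact (hper.map_mod_nat (p * m)).symm
  have h3 : ∀ q : ℕ, ∑ n ∈ range (q * u), F n = q * ∑ n ∈ range u, F n := by
    intro q
    induction q with
    | zero => simp
    | succ q ih =>
      rw [add_mul, one_mul, sum_range_add, ih]
      have : ∀ n ∈ range u, F (q * u + n) = F n := by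
        intro n _
        rw [add_comm]; exact mul_periodic u F hF q n
      rw [sum_congr rfl this]
      push_cast; ring
  rw [h2, h3]

/-- Every prime of `P` divides `M` exactly once. -/
def Good (P : Finset ℕ) (M : ℕ) : Prop :=
  0 < M ∧ ∀ p ∈ P, p.Prime ∧ ∃ u, M = p * u ∧ p.Coprime u

noncomputable def hh (p n : ℕ) : ℝ := if p ∣ n then -1 else 1 / ((p : ℝ) - 1)
noncomputable def hA (A : Finset ℕ) (n : ℕ) : ℝ := ∏ p ∈ A, hh p n
noncomputable def SS (𝒜 : Finset (Finset ℕ)) (n : ℕ) : ℝ := ∑ A ∈ 𝒜, hA A n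
noncomputable def gA (A : Finset ℕ) : ℝ := ∏ p ∈ A, 1 / ((p : ℝ) - 1)
noncomputable def GG (𝒜 : Finset (Finset ℕ)) : ℝ := ∑ A ∈ 𝒜, gA A

theorem pm1_pos {p : ℕ} (hp : p.Prime) : (0 : ℝ) < (p : ℝ) - 1 := by
  have : (2 : ℝ) ≤ p := by exact_mod_cast hp.two_le
  linarith

theorem hh_eq {p : ℕ} (hp : p.Prime) (n : ℕ) :
    hh p n = 1 / ((p : ℝ) - 1) + (-(p / ((p : ℝ) - 1))) * dv p n := by
  have := pm1_pos hp
  unfold hh dv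
  split_ifs
  · field_simp; ring
  · simp

theorem hh_sq_eq {p : ℕ} (n : ℕ) :
    hh p n ^ 2 = 1 / ((p : ℝ) - 1) ^ 2 + (1 - 1 / ((p : ℝ) - 1) ^ 2) * dv p n := by
  unfold hh dv
  split_ifs
  · simp
  · simp

theorem gA_nonneg {P : Finset ℕ} (hP : ∀ p ∈ P, p.Prime) {A : Finset ℕ} (hA : A ⊆ P) :
    0 ≤ gA A := by
  apply prod_nonneg
  intro p hp
  have := pm1_pos (hP p (hA hp))
  positivity

theorem hA_shift {P : Finset ℕ} {M : ℕ} (hG : Good P M) {A : Finset ℕ} (hAP : A ⊆ P)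
    {v : ℕ} (hv : ∀ q ∈ A, q ∣ v) (n : ℕ) : hA A (n + v) = hA A n := by
  apply prod_congr rfl
  intro q hq
  unfold hh
  simp only [Nat.dvd_add_left (hv q hq)]

theorem good_dvd {P : Finset ℕ} {M : ℕ} (hG : Good P M) {p u : ℕ} (hp : p ∈ P) (hM : M = p * u)
    {q : ℕ} (hq : q ∈ P) (hne : q ≠ p) : q ∣ u := by
  obtain ⟨hqp, v, hv, _⟩ := hG.2 q hq
  have h1 : q ∣ p * u := by rw [← hM, hv]; exact dvd_mul_right _ _
  rcases (Nat.Prime.dvd_mul hqp).1 h1 with h | h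
  · exact absurd ((Nat.prime_dvd_prime_iff_eq hqp (hG.2 p hp).1).1 h) hne
  · exact h

theorem mean_lin (p u : ℕ) (hp : p.Prime) (hu : 0 < u) (hc : p.Coprime u) (F : ℕ → ℝ)
    (hF : ∀ n, F (n + u) = F n) (H : ℕ → ℝ) (α β : ℝ) (hH : ∀ n, H n = α + β * dv p n) :
    ∑ n ∈ range (p * u), H n * F n = (α + β / p) * ∑ n ∈ range (p * u), F n := by
  have h1 := orbit2 p u hp.pos hu hc F hF
  have hp0 : (p : ℝ) ≠ 0 := by exact_mod_cast hp.ne_zero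
  simp_rw [hH, add_mul, sum_add_distrib, mul_assoc, ← mul_sum]
  rw [← h1]
  field_simp

theorem ortho {P : Finset ℕ} {M : ℕ} (hG : Good P M) {A B : Finset ℕ} (hAP : A ⊆ P)
    (hBP : B ⊆ P) {p : ℕ} (hpA : p ∈ A) (hpB : p ∉ B) :
    ∑ n ∈ range M, hA A n * hA B n = 0 := by
  classical
  obtain ⟨hp, u, hu, hc⟩ := hG.2 p (hAP hpA)
  have hu0 : 0 < u := Nat.pos_of_ne_zero (by
    rintro rfl; have := hG.1; simp [hu] at this)
  have h1 : ∀ n, hA A n * hA B n = hh p n * (hA (A.erase p) n * hA B n) := by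
    intro n
    unfold hA
    rw [← mul_prod_erase A _ hpA]; ring
  simp_rw [h1]
  rw [hu, mean_lin p u hp hu0 hc _ _ _ _ _ (hh_eq hp)]
  · have := pm1_pos hp
    have h2 : (p : ℝ) ≠ 0 := by exact_mod_cast hp.ne_zero
    have h3 : (1 / ((p : ℝ) - 1) + -(p / ((p : ℝ) - 1)) / p) = 0 := by field_simp; ring
    rw [h3, zero_mul]
  · intro n
    rw [hA_shift hG ((erase_subset _ _).trans hAP), hA_shift hG hBP]
    · intro q hq
      exact good_dvd hG (hAP hpA) hu (hBP hq) (by rintro rfl; exact hpB hq)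
    · intro q hq
      rw [mem_erase] at hq
      exact good_dvd hG (hAP hpA) hu (hAP hq.2) hq.1

theorem ortho_self {P : Finset ℕ} {M : ℕ} (hG : Good P M) (A : Finset ℕ) (hAP : A ⊆ P) :
    ∑ n ∈ range M, hA A n * hA A n = M * gA A := by
  classical
  induction A using Finset.induction_on with
  | empty => simp [hA, gA]
  | insert p A hpA ih =>
    have hpP : p ∈ P := hAP (mem_insert_self _ _)
    have hAP' : A ⊆ P := (subset_insert _ _).trans hAP
    obtain ⟨hp, u, hu, hc⟩ := hG.2 p hpP
    have hu0 : 0 < u := Nat.pos_of_ne_zero (by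
      rintro rfl; have := hG.1; simp [hu] at this)
    have h1 : ∀ n, hA (insert p A) n * hA (insert p A) n = hh p n ^ 2 * (hA A n * hA A n) := by
      intro n
      unfold hA
      rw [prod_insert hpA]; ring
    have hsh : ∀ n, hA A (n + u) = hA A n := fun n => hA_shift hG hAP' (fun q hq =>
      good_dvd hG hpP hu (hAP' hq) (by rintro rfl; exact hpA hq)) n
    have h2 := mean_lin p u hp hu0 hc (fun n => hA A n * hA A n)
      (by intro n; simp only [hsh]) (fun n => hh p n ^ 2) _ _ (hh_sq_eq)
    simp_rw [h1]
    rw [← hu] at h2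
    rw [h2, ih hAP']
    have hg : gA (insert p A) = 1 / ((p : ℝ) - 1) * gA A := by
      unfold gA; rw [prod_insert hpA]
    rw [hg]
    have := pm1_pos hp
    have h3 : (p : ℝ) ≠ 0 := by exact_mod_cast hp.ne_zero
    have h4 : (1 / ((p : ℝ) - 1) ^ 2 + (1 - 1 / ((p : ℝ) - 1) ^ 2) / p) = 1 / ((p : ℝ) - 1) := by
      field_simp; ring
    rw [h4]; ring

theorem mean_sq {P : Finset ℕ} {M : ℕ} (hG : Good P M) (𝒜 : Finset (Finset ℕ))
    (h𝒜 : ∀ A ∈ 𝒜, A ⊆ P) : ∑ n ∈ range M, SS 𝒜 n ^ 2 = M * GG 𝒜 := by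
  classical
  have h1 : ∀ n, SS 𝒜 n ^ 2 = ∑ A ∈ 𝒜, ∑ B ∈ 𝒜, hA A n * hA B n := by
    intro n; unfold SS; rw [sq, sum_mul_sum]
  simp_rw [h1]
  rw [sum_comm]
  unfold GG
  rw [mul_sum]
  refine sum_congr rfl fun A hA' => ?_
  rw [sum_comm, sum_eq_single A]
  · exact ortho_self hG A (h𝒜 A hA')
  · intro B hB hne
    have : (∃ p ∈ A, p ∉ B) ∨ (∃ p ∈ B, p ∉ A) := by
      by_contra hcon
      push Not at hcon
      exact hne (Subset.antisymm hcon.2 hcon.1)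
    rcases this with ⟨p, hp1, hp2⟩ | ⟨p, hp1, hp2⟩
    · exact ortho hG (h𝒜 A hA') (h𝒜 B hB) hp1 hp2
    · simp_rw [mul_comm (hA A _)]
      exact ortho hG (h𝒜 B hB) (h𝒜 A hA') hp1 hp2
  · intro h; exact absurd hA' h

theorem twist (p u : ℕ) (hp : p.Prime) (hu : 0 < u) (hc : p.Coprime u) (F : ℕ → ℝ)
    (hF : ∀ n, F (n + u) = F n) (H : ℕ → ℝ) (α β : ℝ) (hH : ∀ n, H n = α + β * dv p n)
    (ω : ℂ) (hω : ω ^ (p * u) = 1) (hωu : ω ^ u ≠ 1) :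
    ‖∑ n ∈ range (p * u), ((H n * F n : ℝ) : ℂ) * ω ^ n‖
      ≤ |β| / p * ∑ n ∈ range (p * u), |F n| := by
  have hM : p * u ≠ 0 := (Nat.mul_pos hp.pos hu).ne'
  have hn1 : ‖ω‖ = 1 := Complex.norm_eq_one_of_pow_eq_one hω hM
  have h1 := orbit1 (p * u) u F (mul_periodic u F hF p) hF ω hω hωu
  have h2 : ∑ n ∈ range (p * u), ((H n * F n : ℝ) : ℂ) * ω ^ n
      = ∑ n ∈ range (p * u), ((β * (dv p n * F n) : ℝ) : ℂ) * ω ^ n := by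
    have h3 : ∀ n ∈ range (p * u), ((H n * F n : ℝ) : ℂ) * ω ^ n =
        α * ((F n : ℂ) * ω ^ n) + ((β * (dv p n * F n) : ℝ) : ℂ) * ω ^ n := by
      intro n _; rw [hH]; push_cast; ring
    rw [sum_congr rfl h3, sum_add_distrib, ← mul_sum, h1, mul_zero, zero_add]
  rw [h2]
  have h4 := orbit2 p u hp.pos hu hc (fun n => |F n|) (fun n => by rw [hF])
  have hp0 : (p : ℝ) ≠ 0 := by exact_mod_cast hp.ne_zero
  calc _ ≤ ∑ n ∈ range (p * u), ‖((β * (dv p n * F n) : ℝ) : ℂ) * ω ^ n‖ := norm_sum_le _ _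
    _ = ∑ n ∈ range (p * u), |β| * (dv p n * |F n|) := by
        refine sum_congr rfl fun n _ => ?_
        rw [norm_mul, norm_pow, hn1, one_pow, mul_one, Complex.norm_real, Real.norm_eq_abs,
          abs_mul, abs_mul]
        congr 2
        unfold dv; split_ifs <;> simp
    _ = |β| / p * ∑ n ∈ range (p * u), |F n| := by
        rw [← h4, ← mul_sum]; field_simp

theorem coefA {P : Finset ℕ} {M : ℕ} (hG : Good P M) (𝒜 : Finset (Finset ℕ))
    (h𝒜 : ∀ A ∈ 𝒜, A ⊆ P) (hdown : ∀ A ∈ 𝒜, ∀ B ⊆ A, B ∈ 𝒜)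
    {p u : ℕ} (hpP : p ∈ P) (hu : M = p * u) (hc : p.Coprime u)
    (ω : ℂ) (hω : ω ^ M = 1) (hωu : ω ^ u ≠ 1) :
    ‖∑ n ∈ range M, ((SS 𝒜 n ^ 2 : ℝ) : ℂ) * ω ^ n‖ ≤ 3 / ((p : ℝ) - 1) * (M * GG 𝒜) := by
  classical
  have hp := (hG.2 p hpP).1
  have hu0 : 0 < u := Nat.pos_of_ne_zero (by
    rintro rfl; have := hG.1; simp [hu] at this)
  have hPp : ∀ p ∈ P, p.Prime := fun p hp => (hG.2 p hp).1
  set 𝒜0 := 𝒜.filter (fun A => p ∉ A) with h0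
  set 𝒜1 := (𝒜.filter (fun A => p ∈ A)).image (fun A => A.erase p) with h1
  have hinj : Set.InjOn (fun A : Finset ℕ => A.erase p) (𝒜.filter (fun A => p ∈ A)) := by
    intro A hA' B hB' hAB
    simp only [coe_filter, Set.mem_ofPred_eq] at hA' hB'
    have := congrArg (insert p) hAB
    simpa [insert_erase hA'.2, insert_erase hB'.2] using this
  have hsub0 : 𝒜0 ⊆ 𝒜 := filter_subset _ _
  have hsub1 : 𝒜1 ⊆ 𝒜 := by
    intro B hB
    rw [h1, mem_image] at hB
    obtain ⟨A, hA', rfl⟩ := hB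
    exact hdown A (mem_filter.1 hA').1 _ (erase_subset _ _)
  have hnp0 : ∀ A ∈ 𝒜0, p ∉ A := fun A hA' => (mem_filter.1 hA').2
  have hnp1 : ∀ A ∈ 𝒜1, p ∉ A := by
    intro B hB
    rw [h1, mem_image] at hB
    obtain ⟨A, _, rfl⟩ := hB
    simp
  have hsplit : ∀ n, SS 𝒜 n = SS 𝒜0 n + hh p n * SS 𝒜1 n := by
    intro n
    unfold SS
    rw [h0, h1, sum_image hinj, ← sum_filter_add_sum_filter_not 𝒜 (fun A => p ∉ A), mul_sum]
    congr 1
    simp only [not_not]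
    refine sum_congr rfl fun A hA' => ?_
    unfold hA
    rw [mul_prod_erase A (fun p => hh p n) (mem_filter.1 hA').2]
  have hshift : ∀ ℬ : Finset (Finset ℕ), ℬ ⊆ 𝒜 → (∀ A ∈ ℬ, p ∉ A) → ∀ n,
      SS ℬ (n + u) = SS ℬ n := by
    intro ℬ hℬ hnp n
    unfold SS
    refine sum_congr rfl fun A hA' => ?_
    apply hA_shift hG (h𝒜 A (hℬ hA'))
    intro q hq
    exact good_dvd hG hpP hu (h𝒜 A (hℬ hA') hq) (by rintro rfl; exact hnp A hA' hq)
  have hs0 := hshift 𝒜0 hsub0 hnp0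
  have hs1 := hshift 𝒜1 hsub1 hnp1
  have hGle : ∀ ℬ : Finset (Finset ℕ), ℬ ⊆ 𝒜 → GG ℬ ≤ GG 𝒜 := by
    intro ℬ hℬ
    exact sum_le_sum_of_subset_of_nonneg hℬ (fun A hA' _ => gA_nonneg hPp (h𝒜 A hA'))
  have hm0 : ∑ n ∈ range M, SS 𝒜0 n ^ 2 ≤ M * GG 𝒜 := by
    rw [mean_sq hG 𝒜0 (fun A hA' => h𝒜 A (hsub0 hA'))]
    exact mul_le_mul_of_nonneg_left (hGle _ hsub0) (by positivity)
  have hm1 : ∑ n ∈ range M, SS 𝒜1 n ^ 2 ≤ M * GG 𝒜 := by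
    rw [mean_sq hG 𝒜1 (fun A hA' => h𝒜 A (hsub1 hA'))]
    exact mul_le_mul_of_nonneg_left (hGle _ hsub1) (by positivity)
  have hpm := pm1_pos hp
  have hp0 : (0 : ℝ) < p := by exact_mod_cast hp.pos
  have hp2 : (2 : ℝ) ≤ p := by exact_mod_cast hp.two_le
  subst hu
  have e0 := orbit1 (p * u) u (fun n => SS 𝒜0 n ^ 2)
    (mul_periodic u (fun n => SS 𝒜0 n ^ 2) (fun n => by simp only [hs0]) p) (fun n => by rw [hs0]) ω hω hωu
  have e1 := twist p u hp hu0 hc (fun n => SS 𝒜0 n * SS 𝒜1 n) (fun n => by rw [hs0, hs1])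
    (hh p) _ _ (hh_eq hp) ω hω hωu
  have e2 := twist p u hp hu0 hc (fun n => SS 𝒜1 n ^ 2) (fun n => by rw [hs1])
    (fun n => hh p n ^ 2) _ _ hh_sq_eq ω hω hωu
  have b1 : |(-((p : ℝ) / ((p : ℝ) - 1)))| / p = 1 / ((p : ℝ) - 1) := by
    rw [abs_neg, abs_of_pos (by positivity)]; field_simp
  have b2 : |1 - 1 / ((p : ℝ) - 1) ^ 2| / p ≤ 1 / ((p : ℝ) - 1) := by
    have h3 : 1 / ((p : ℝ) - 1) ^ 2 ≤ 1 := by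
      rw [div_le_one (by positivity)]
      nlinarith
    have h4 : 0 < 1 / ((p : ℝ) - 1) ^ 2 := by positivity
    rw [abs_of_nonneg (by linarith)]
    rw [div_le_div_iff₀ hp0 hpm]
    nlinarith
  rw [b1] at e1
  have c1 : ∑ n ∈ range (p * u), |SS 𝒜0 n * SS 𝒜1 n| ≤ ((p * u : ℕ) : ℝ) * GG 𝒜 := by
    have : ∀ n ∈ range (p * u), |SS 𝒜0 n * SS 𝒜1 n| ≤ (SS 𝒜0 n ^ 2 + SS 𝒜1 n ^ 2) / 2 := by
      intro n _
      rw [abs_mul]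
      nlinarith [sq_nonneg (|SS 𝒜0 n| - |SS 𝒜1 n|), sq_abs (SS 𝒜0 n), sq_abs (SS 𝒜1 n)]
    refine (sum_le_sum this).trans ?_
    rw [← sum_div, sum_add_distrib]
    linarith
  have c2 : ∑ n ∈ range (p * u), |SS 𝒜1 n ^ 2| ≤ ((p * u : ℕ) : ℝ) * GG 𝒜 := by
    have h9 : ∀ n, |SS 𝒜1 n ^ 2| = SS 𝒜1 n ^ 2 := fun n => abs_of_nonneg (sq_nonneg _)
    simp only [h9]
    exact hm1
  have hexp : ∑ n ∈ range (p * u), ((SS 𝒜 n ^ 2 : ℝ) : ℂ) * ω ^ n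
      = 2 * ∑ n ∈ range (p * u), ((hh p n * (SS 𝒜0 n * SS 𝒜1 n) : ℝ) : ℂ) * ω ^ n
        + ∑ n ∈ range (p * u), ((hh p n ^ 2 * SS 𝒜1 n ^ 2 : ℝ) : ℂ) * ω ^ n := by
    have h5 : ∀ n ∈ range (p * u), ((SS 𝒜 n ^ 2 : ℝ) : ℂ) * ω ^ n =
        ((SS 𝒜0 n ^ 2 : ℝ) : ℂ) * ω ^ n
        + (2 * (((hh p n * (SS 𝒜0 n * SS 𝒜1 n) : ℝ) : ℂ) * ω ^ n)
        + ((hh p n ^ 2 * SS 𝒜1 n ^ 2 : ℝ) : ℂ) * ω ^ n) := by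
      intro n _
      rw [hsplit]; push_cast; ring
    rw [sum_congr rfl h5, sum_add_distrib, sum_add_distrib, ← mul_sum, e0, zero_add]
  rw [hexp]
  have hT : 0 ≤ ((p * u : ℕ) : ℝ) * GG 𝒜 := le_trans (sum_nonneg fun _ _ => abs_nonneg _) c1
  have f1 := e1.trans (mul_le_mul_of_nonneg_left c1 (by positivity))
  have f2 := e2.trans ((mul_le_mul_of_nonneg_left c2 (by positivity)).trans
    (mul_le_mul_of_nonneg_right b2 hT))
  refine (norm_add_le _ _).trans ?_
  rw [norm_mul, Complex.norm_ofNat]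
  have h6 : 3 / ((p : ℝ) - 1) * (((p * u : ℕ) : ℝ) * GG 𝒜)
    = 2 * (1 / ((p : ℝ) - 1) * (((p * u : ℕ) : ℝ) * GG 𝒜))
      + 1 / ((p : ℝ) - 1) * (((p * u : ℕ) : ℝ) * GG 𝒜) := by ring
  rw [h6]
  linarith

/-- The normalised Selberg weight. -/
noncomputable def gg (𝒜 : Finset (Finset ℕ)) (n : ℕ) : ℝ := SS 𝒜 n ^ 2 / GG 𝒜

theorem GG_ge_one {P : Finset ℕ} (hP : ∀ p ∈ P, p.Prime) (𝒜 : Finset (Finset ℕ))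
    (h𝒜 : ∀ A ∈ 𝒜, A ⊆ P) (hne : ∅ ∈ 𝒜) : 1 ≤ GG 𝒜 := by
  have h1 : gA ∅ ≤ GG 𝒜 :=
    single_le_sum (f := gA) (fun A hA' => gA_nonneg hP (h𝒜 A hA')) hne
  simpa [gA] using h1

theorem coef_bound {P : Finset ℕ} {M Z : ℕ} (hZ : 0 < Z) (hPZ : ∀ p ∈ P, Z < p)
    (hG : Good P M) (𝒜 : Finset (Finset ℕ))
    (h𝒜 : ∀ A ∈ 𝒜, A ⊆ P) (hdown : ∀ A ∈ 𝒜, ∀ B ⊆ A, B ∈ 𝒜) (hne : ∅ ∈ 𝒜)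
    (ω : ℂ) (hω : ω ^ M = 1) :
    ‖∑ n ∈ range M, ((gg 𝒜 n - 1 : ℝ) : ℂ) * ω ^ n‖ ≤ 3 / (Z : ℝ) * M := by
  classical
  have hPp : ∀ p ∈ P, p.Prime := fun p hp => (hG.2 p hp).1
  have hGG := GG_ge_one hPp 𝒜 h𝒜 hne
  have hGG0 : 0 < GG 𝒜 := by linarith
  have hZr : (0 : ℝ) < Z := by exact_mod_cast hZ
  by_cases h1 : ω = 1
  · have h2 := mean_sq hG 𝒜 h𝒜
    have h3 : ∑ n ∈ range M, (gg 𝒜 n - 1) = 0 := by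
      unfold gg
      rw [sum_sub_distrib, ← sum_div, h2]
      simp; field_simp; simp
    have h4 : ∑ n ∈ range M, ((gg 𝒜 n - 1 : ℝ) : ℂ) * ω ^ n = 0 := by
      rw [h1]; simp only [one_pow, mul_one]; rw [← Complex.ofReal_sum, h3]; simp
    rw [h4, norm_zero]; positivity
  have hgeom := geom_zero ω M hω h1
  have hred : ∑ n ∈ range M, ((gg 𝒜 n - 1 : ℝ) : ℂ) * ω ^ n
      = ((GG 𝒜 : ℝ) : ℂ)⁻¹ * ∑ n ∈ range M, ((SS 𝒜 n ^ 2 : ℝ) : ℂ) * ω ^ n := by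
    have : ∀ n ∈ range M, ((gg 𝒜 n - 1 : ℝ) : ℂ) * ω ^ n =
        ((GG 𝒜 : ℝ) : ℂ)⁻¹ * (((SS 𝒜 n ^ 2 : ℝ) : ℂ) * ω ^ n) - ω ^ n := by
      intro n _; unfold gg; push_cast; ring
    rw [sum_congr rfl this, sum_sub_distrib, hgeom, sub_zero, mul_sum]
  by_cases h2 : ∃ p ∈ P, ∃ u, M = p * u ∧ p.Coprime u ∧ ω ^ u ≠ 1
  · obtain ⟨p, hp, u, hu, hc, hωu⟩ := h2
    have h3 := coefA hG 𝒜 h𝒜 hdown hp hu hc ω hω hωu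
    rw [hred, norm_mul, norm_inv, Complex.norm_real, Real.norm_eq_abs, abs_of_pos hGG0]
    have h4 : (Z : ℝ) ≤ (p : ℝ) - 1 := by
      have : Z + 1 ≤ p := hPZ p hp
      have : ((Z + 1 : ℕ) : ℝ) ≤ p := by exact_mod_cast this
      push_cast at this; linarith
    calc (GG 𝒜)⁻¹ * _ ≤ (GG 𝒜)⁻¹ * (3 / ((p : ℝ) - 1) * (M * GG 𝒜)) :=
          mul_le_mul_of_nonneg_left h3 (by positivity)
      _ = 3 / ((p : ℝ) - 1) * M := by field_simp
      _ ≤ 3 / (Z : ℝ) * M := by gcongr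
  · push Not at h2
    set M1 := ∏ p ∈ P, p with hM1
    have hM1ne : ω ^ M1 ≠ 1 := by
      intro hcon
      have ho1 : orderOf ω ∣ M1 := orderOf_dvd_of_pow_eq_one hcon
      have ho2 : orderOf ω ≠ 1 := by rw [Ne, orderOf_eq_one_iff]; exact h1
      obtain ⟨q, hq, hqd⟩ := Nat.exists_prime_and_dvd ho2
      have hqP : q ∈ P := by
        have : q ∣ ∏ p ∈ P, p := hqd.trans ho1
        obtain ⟨p, hp, hqp⟩ := (Prime.dvd_finsetProd_iff hq.prime _).1 this
        rwa [(Nat.prime_dvd_prime_iff_eq hq (hPp p hp)).1 hqp]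
      obtain ⟨_, u, hu, hc⟩ := hG.2 q hqP
      have ho3 : orderOf ω ∣ u := orderOf_dvd_of_pow_eq_one (h2 q hqP u hu hc)
      have h5 : q ∣ u := hqd.trans ho3
      have h6 : q ∣ Nat.gcd q u := Nat.dvd_gcd dvd_rfl h5
      rw [hc] at h6
      exact hq.one_lt.ne' (Nat.dvd_one.1 h6)
    have hsh : ∀ v, (∀ q ∈ P, q ∣ v) → ∀ n, SS 𝒜 (n + v) = SS 𝒜 n := by
      intro v hv n
      unfold SS
      exact sum_congr rfl fun A hA' => hA_shift hG (h𝒜 A hA') (fun q hq => hv q (h𝒜 A hA' hq)) n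
    have h7 := orbit1 M M1 (fun n => SS 𝒜 n ^ 2)
      (fun n => by
        rw [hsh M]
        intro q hq
        obtain ⟨_, u, hu, _⟩ := hG.2 q hq
        exact ⟨u, hu⟩)
      (fun n => by rw [hsh M1 (fun q hq => dvd_prod_of_mem _ hq)]) ω hω hM1ne
    rw [hred, h7, mul_zero, norm_zero]
    positivity

theorem gg_nonneg {P : Finset ℕ} (hP : ∀ p ∈ P, p.Prime) (𝒜 : Finset (Finset ℕ))
    (h𝒜 : ∀ A ∈ 𝒜, A ⊆ P) (hne : ∅ ∈ 𝒜) (n : ℕ) : 0 ≤ gg 𝒜 n := by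
  have := GG_ge_one hP 𝒜 h𝒜 hne
  unfold gg; positivity

theorem gg_mean {P : Finset ℕ} {M : ℕ} (hG : Good P M) (𝒜 : Finset (Finset ℕ))
    (h𝒜 : ∀ A ∈ 𝒜, A ⊆ P) (hne : ∅ ∈ 𝒜) : ∑ n ∈ range M, gg 𝒜 n = M := by
  have := GG_ge_one (fun p hp => (hG.2 p hp).1) 𝒜 h𝒜 hne
  unfold gg
  rw [← sum_div, mean_sq hG 𝒜 h𝒜]
  field_simp

theorem gg_mul {P : Finset ℕ} (𝒜 : Finset (Finset ℕ)) (h𝒜 : ∀ A ∈ 𝒜, A ⊆ P) (d : ℕ)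
    (hd : ∀ p ∈ P, p.Coprime d) (m : ℕ) : gg 𝒜 (d * m) = gg 𝒜 m := by
  have : SS 𝒜 (d * m) = SS 𝒜 m := by
    unfold SS hA hh
    refine sum_congr rfl fun A hA' => prod_congr rfl fun p hp => ?_
    simp only [(hd p (h𝒜 A hA' hp)).dvd_mul_left]
  unfold gg; rw [this]

theorem hA_lev {P : Finset ℕ} {M : ℕ} (hG : Good P M) (A : Finset ℕ) (hAP : A ⊆ P) :
    hA A ∈ Lev M (∏ p ∈ A, p) := by
  classical
  induction A using Finset.induction_on with
  | empty =>
    have : hA ∅ = dv 1 := by funext n; simp [hA, dv]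
    rw [this]
    exact dv_mem _ _ _ (one_dvd _) one_pos (by simp)
  | insert p A hpA ih =>
    have hpP : p ∈ P := hAP (mem_insert_self _ _)
    obtain ⟨hp, u, hu, _⟩ := hG.2 p hpP
    have h1 : hA (insert p A) = hh p * hA A := by
      funext n; simp [hA, prod_insert hpA]
    rw [h1, prod_insert hpA]
    apply lev_mul _ (ih ((subset_insert _ _).trans hAP))
    have h2 : hh p = (1 / ((p : ℝ) - 1)) • dv 1 + (-(p / ((p : ℝ) - 1))) • dv p := by
      funext n
      rw [hh_eq hp]
      by_cases h : p ∣ n <;> simp [dv, h]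
    rw [h2]
    apply Submodule.add_mem <;> apply Submodule.smul_mem
    · exact dv_mem _ _ _ (one_dvd _) one_pos hp.pos
    · exact dv_mem _ _ _ ⟨u, hu⟩ hp.pos le_rfl

theorem gg_lev {P : Finset ℕ} {M R : ℕ} (hG : Good P M) (𝒜 : Finset (Finset ℕ))
    (h𝒜 : ∀ A ∈ 𝒜, A ⊆ P) (hR : ∀ A ∈ 𝒜, ∏ p ∈ A, p ≤ R) : gg 𝒜 ∈ Lev M (R * R) := by
  have h1 : SS 𝒜 ∈ Lev M R := by
    have : SS 𝒜 = ∑ A ∈ 𝒜, hA A := by funext n; simp [SS]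
    rw [this]
    exact Submodule.sum_mem _ fun A hA' => lev_mono (hR A hA') (hA_lev hG A (h𝒜 A hA'))
  have h2 : gg 𝒜 = (GG 𝒜)⁻¹ • (SS 𝒜 * SS 𝒜) := by
    funext n; simp [gg]; ring
  rw [h2]
  exact Submodule.smul_mem _ _ (lev_mul h1 h1)

theorem gg_coprime (𝒜 : Finset (Finset ℕ)) (n : ℕ) (hn : ∀ A ∈ 𝒜, ∀ p ∈ A, ¬ p ∣ n)
    (hpos : 0 < GG 𝒜) : gg 𝒜 n = GG 𝒜 := by
  have : SS 𝒜 n = GG 𝒜 := by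
    unfold SS GG hA gA hh
    refine sum_congr rfl fun A hA' => prod_congr rfl fun p hp => ?_
    rw [if_neg (hn A hA' p hp)]
  unfold gg; rw [this]; field_simp

end PM

namespace PM
open Finset

noncomputable def es (P : Finset ℕ) (x : ℕ → ℝ) (i : ℕ) : ℝ :=
  ∑ A ∈ powersetCard i P, ∏ p ∈ A, x p

theorem es_zero (P : Finset ℕ) (x : ℕ → ℝ) : es P x 0 = 1 := by simp [es]

theorem es_empty_succ (x : ℕ → ℝ) (i : ℕ) : es ∅ x (i + 1) = 0 := by
  unfold es
  rw [powersetCard_eq_empty.2 (by simp)]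
  simp

theorem es_insert (P : Finset ℕ) (x : ℕ → ℝ) (q : ℕ) (hq : q ∉ P) (i : ℕ) :
    es (insert q P) x (i + 1) = es P x (i + 1) + x q * es P x i := by
  unfold es
  rw [powersetCard_succ_insert hq, sum_union]
  · congr 1
    rw [sum_image, mul_sum]
    · refine sum_congr rfl fun A hA' => ?_
      rw [prod_insert]
      exact fun h => hq ((mem_powersetCard.1 hA').1 h)
    · intro A hA' B hB' hAB
      have ha : q ∉ A := fun h => hq ((mem_powersetCard.1 hA').1 h)
      have hb : q ∉ B := fun h => hq ((mem_powersetCard.1 hB').1 h)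
      have := congrArg (fun S => S.erase q) hAB
      simpa [erase_insert ha, erase_insert hb] using this
  · rw [disjoint_left]
    intro A h1 h2
    rw [mem_image] at h2
    obtain ⟨B, _, rfl⟩ := h2
    exact hq ((mem_powersetCard.1 h1).1 (mem_insert_self _ _))

theorem es_nonneg (P : Finset ℕ) (x : ℕ → ℝ) (hx : ∀ p, 0 ≤ x p) (i : ℕ) : 0 ≤ es P x i :=
  sum_nonneg fun _ _ => prod_nonneg fun _ _ => hx _

theorem bonferroni (P : Finset ℕ) (x : ℕ → ℝ) (hx : ∀ p, 0 ≤ x p) (hx1 : ∀ p, x p ≤ 1) (t : ℕ) :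
    |∏ p ∈ P, (1 - x p) - ∑ i ∈ range t, (-1) ^ i * es P x i| ≤ es P x t := by
  induction P using Finset.induction_on generalizing t with
  | empty =>
    cases t with
    | zero => simp [es]
    | succ t =>
      rw [sum_range_succ']
      simp [es_empty_succ, es_zero]
  | insert q P hq ih =>
    rw [prod_insert hq]
    cases t with
    | zero =>
      have h1 := ih 0
      simp only [range_zero, sum_empty, sub_zero, es_zero] at h1 ⊢
      rw [abs_mul]
      have h2 : |1 - x q| ≤ 1 := by
        rw [abs_le]; constructor <;> linarith [hx q, hx1 q]
      nlinarith [abs_nonneg (1 - x q), abs_nonneg (∏ p ∈ P, (1 - x p))]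
    | succ t =>
      have h1 := ih (t + 1)
      have h2 := ih t
      rw [es_insert P x q hq]
      have h3 : ∑ i ∈ range (t + 1), (-1) ^ i * es (insert q P) x i
          = ∑ i ∈ range (t + 1), (-1) ^ i * es P x i
            - x q * ∑ i ∈ range t, (-1) ^ i * es P x i := by
        rw [sum_range_succ', sum_range_succ' (fun i => (-1) ^ i * es P x i)]
        simp only [es_insert P x q hq, es_zero]
        rw [mul_sum, add_sub_right_comm, ← sum_sub_distrib]
        congr 1
        refine sum_congr rfl fun i _ => ?_
        ring
      rw [h3]
      rw [abs_le] at *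
      have := hx q
      constructor <;> nlinarith

theorem es_sum_le (P : Finset ℕ) (x : ℕ → ℝ) (hx : ∀ p, 0 ≤ x p) (t : ℕ) :
    ∑ i ∈ range t, es P x i ≤ ∏ p ∈ P, (1 + x p) := by
  induction P using Finset.induction_on generalizing t with
  | empty =>
    cases t with
    | zero => simp
    | succ t =>
      rw [sum_range_succ']
      simp [es_empty_succ, es_zero]
  | insert q P hq ih =>
    rw [prod_insert hq]
    cases t with
    | zero => simp only [range_zero, sum_empty]; exact mul_nonneg (by linarith [hx q]) (prod_nonneg fun p _ => by linarith [hx p])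
    | succ t =>
      have h1 := ih (t + 1)
      have h2 := ih t
      have h3 : ∑ i ∈ range (t + 1), es (insert q P) x i
          = ∑ i ∈ range (t + 1), es P x i + x q * ∑ i ∈ range t, es P x i := by
        rw [sum_range_succ', sum_range_succ' (fun i => es P x i)]
        simp only [es_insert P x q hq, es_zero]
        rw [mul_sum, sum_add_distrib]
        ring
      rw [h3]
      have := mul_le_mul_of_nonneg_left h2 (hx q)
      linarith

noncomputable def WW (P : Finset ℕ) : ℝ := ∏ p ∈ P, ((p : ℝ) / ((p : ℝ) - 1))

theorem one_add_inv_le {p : ℕ} (hp : p.Prime) : 1 + 1 / (p : ℝ) ≤ (p : ℝ) / ((p : ℝ) - 1) := by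
  have h1 := pm1_pos hp
  have h2 : (0 : ℝ) < p := by linarith
  rw [le_div_iff₀ h1]
  field_simp
  nlinarith

theorem WW_ge_one (P : Finset ℕ) (hP : ∀ p ∈ P, p.Prime) : 1 ≤ WW P := by
  unfold WW
  have : ∏ p ∈ P, (1 : ℝ) ≤ ∏ p ∈ P, ((p : ℝ) / ((p : ℝ) - 1)) := by
    refine prod_le_prod (fun _ _ => by norm_num) fun p hp => ?_
    have h1 := pm1_pos (hP p hp)
    rw [le_div_iff₀ h1]; linarith
  simpa using this

theorem prod_one_add_le (P : Finset ℕ) (hP : ∀ p ∈ P, p.Prime) :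
    ∏ p ∈ P, (1 + 1 / (p : ℝ)) ≤ WW P :=
  prod_le_prod (fun _ _ => by positivity) fun p hp => one_add_inv_le (hP p hp)

theorem es_small (P : Finset ℕ) (hP : ∀ p ∈ P, p.Prime) (t : ℕ) :
    es P (fun p => 1 / (p : ℝ)) t ≤ WW P ^ 16 / 16 ^ t := by
  have h1 : es P (fun p => 16 / (p : ℝ)) t = 16 ^ t * es P (fun p => 1 / (p : ℝ)) t := by
    unfold es
    rw [mul_sum]
    refine sum_congr rfl fun A hA' => ?_
    rw [← (mem_powersetCard.1 hA').2, ← prod_const, ← prod_mul_distrib]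
    exact prod_congr rfl fun p _ => by ring
  have h2 : es P (fun p => 16 / (p : ℝ)) t ≤ ∏ p ∈ P, (1 + 16 / (p : ℝ)) := by
    refine le_trans ?_ (es_sum_le P _ (fun p => by positivity) (t + 1))
    exact single_le_sum (f := fun i => es P (fun p => 16 / (p : ℝ)) i)
      (fun i _ => es_nonneg _ _ (fun p => by positivity) _) (by simp)
  have h3 : ∏ p ∈ P, (1 + 16 / (p : ℝ)) ≤ WW P ^ 16 := by
    refine le_trans ?_ (pow_le_pow_left₀ (prod_nonneg fun p _ => by positivity) (prod_one_add_le P hP) 16)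
    rw [← prod_pow]
    refine prod_le_prod (fun p _ => by positivity) fun p _ => ?_
    have := one_add_mul_le_pow (a := 1 / (p : ℝ)) (by
      have : (0:ℝ) ≤ 1 / (p : ℝ) := by positivity
      linarith) 16
    refine le_trans (le_of_eq ?_) this
    push_cast; ring
  rw [le_div_iff₀ (by positivity), mul_comm, ← h1]
  exact h2.trans h3

theorem es_top (P : Finset ℕ) (x : ℕ → ℝ) : es P x (P.card + 1) = 0 := by
  unfold es
  rw [powersetCard_eq_empty.2 (by simp)]
  simp

theorem prod_dv (A : Finset ℕ) (hA : ∀ p ∈ A, p.Prime) (n : ℕ) :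
    ∏ p ∈ A, dv p n = dv (∏ p ∈ A, p) n := by
  induction A using Finset.induction_on with
  | empty => simp [dv]
  | insert q A hq ih =>
    have hA1 : ∀ p ∈ A, p.Prime := fun p hp => hA p (mem_insert_of_mem hp)
    have hqp : q.Prime := hA q (mem_insert_self _ _)
    rw [prod_insert hq, ih hA1, prod_insert hq]
    have h1 := congrFun (dv_mul q (∏ p ∈ A, p)) n
    rw [Pi.mul_apply] at h1
    rw [h1]
    have hc : Nat.Coprime q (∏ p ∈ A, p) := by
      apply Nat.Coprime.prod_right
      intro p hp
      exact (Nat.coprime_primes hqp (hA1 p hp)).2 (by rintro rfl; exact hq hp)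
    rw [hc.lcm_eq_mul]

/-- The normalised indicator of numbers coprime to all of `P`. -/
noncomputable def LL (P : Finset ℕ) (n : ℕ) : ℝ := WW P * ∏ p ∈ P, (1 - dv p n)

theorem dv_nonneg (p n : ℕ) : 0 ≤ dv p n := by unfold dv; split_ifs <;> norm_num
theorem dv_le_one (p n : ℕ) : dv p n ≤ 1 := by unfold dv; split_ifs <;> norm_num

end PM

namespace PM
open Finset

theorem good_sub {P0 P1 : Finset ℕ} (hP0 : ∀ p ∈ P0, p.Prime) (hP1 : ∀ p ∈ P1, p.Prime)
    (hdis : Disjoint P0 P1) (B : Finset ℕ) (hB : B ⊆ P0) :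
    Good P1 ((∏ p ∈ B, p) * ∏ p ∈ P1, p) := by
  classical
  refine ⟨Nat.mul_pos (prod_pos fun p hp => (hP0 p (hB hp)).pos)
    (prod_pos fun p hp => (hP1 p hp).pos), fun p hp => ⟨hP1 p hp, (∏ p ∈ B, p) * ∏ q ∈ P1.erase p, q, ?_, ?_⟩⟩
  · rw [← mul_prod_erase P1 (fun q => q) hp]; ring
  · apply Nat.Coprime.mul_right
    · apply Nat.Coprime.prod_right
      intro q hq
      exact (Nat.coprime_primes (hP1 p hp) (hP0 q (hB hq))).2 (by
        rintro rfl; exact (disjoint_left.1 hdis) (hB hq) hp)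
    · apply Nat.Coprime.prod_right
      intro q hq
      rw [mem_erase] at hq
      exact (Nat.coprime_primes (hP1 p hp) (hP1 q hq.2)).2 hq.1.symm

theorem dv_reduce (M Md d : ℕ) (hd : 0 < d) (hM : M = d * Md) (φ : ℕ → ℝ)
    (hφ : ∀ m, φ (d * m) = φ m) (ω : ℂ) :
    ∑ n ∈ range M, ((dv d n * φ n : ℝ) : ℂ) * ω ^ n
      = ∑ m ∈ range Md, (φ m : ℂ) * (ω ^ d) ^ m := by
  have h1 : ∀ n ∈ range M, ((dv d n * φ n : ℝ) : ℂ) * ω ^ n =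
      if d ∣ n then (φ n : ℂ) * ω ^ n else 0 := by
    intro n _; unfold dv; split_ifs <;> simp
  rw [sum_congr rfl h1, hM, sum_dvd d Md hd]
  refine sum_congr rfl fun m _ => ?_
  rw [hφ, pow_mul]

theorem single {P0 P1 : Finset ℕ} {Z : ℕ} (hZ : 0 < Z) (hP0 : ∀ p ∈ P0, p.Prime)
    (hP1 : ∀ p ∈ P1, p.Prime) (hdis : Disjoint P0 P1) (hPZ : ∀ p ∈ P1, Z < p)
    (𝒜 : Finset (Finset ℕ)) (h𝒜 : ∀ A ∈ 𝒜, A ⊆ P1) (hdown : ∀ A ∈ 𝒜, ∀ B ⊆ A, B ∈ 𝒜)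
    (hne : ∅ ∈ 𝒜) (t D0 R N : ℕ) (hD0 : ∀ A ⊆ P0, A.card ≤ t → ∏ p ∈ A, p ≤ D0)
    (hR : ∀ A ∈ 𝒜, ∏ p ∈ A, p ≤ R) (hN : (D0 * (R * R)) ^ 4 ≤ N) (ξ : ℝ) :
    ‖∑ n ∈ range N, ((LL P0 n * (gg 𝒜 n - 1) : ℝ) : ℂ) * ee (n * ξ)‖
      ≤ (6 * WW P0 ^ 2 / Z + 4 * WW P0 * es P0 (fun p => 1 / (p : ℝ)) t) * N := by
  classical
  set M := (∏ p ∈ P0, p) * ∏ p ∈ P1, p with hMdef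
  have hG : Good P1 M := good_sub hP0 hP1 hdis P0 subset_rfl
  have hM : 0 < M := hG.1
  have hMr : (0 : ℝ) < M := by exact_mod_cast hM
  have hW := WW_ge_one P0 hP0
  have hD0p : 1 ≤ D0 := by simpa using hD0 ∅ (empty_subset _) (by simp)
  have hRp : 1 ≤ R := by simpa using hR ∅ hne
  have hD : 0 < D0 * (R * R) := by positivity
  have hZr : (0 : ℝ) < Z := by exact_mod_cast hZ
  have hgl := gg_lev hG 𝒜 h𝒜 hR
  have hone : (fun _ : ℕ => (1 : ℝ)) ∈ Lev M (R * R) := by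
    have : (fun _ : ℕ => (1 : ℝ)) = dv 1 := by funext n; simp [dv]
    rw [this]
    exact dv_mem _ _ _ (one_dvd _) one_pos (by nlinarith)
  -- facts about a subset
  have hsubs : ∀ A ⊆ P0, ∃ Md, M = (∏ p ∈ A, p) * Md ∧ Good P1 Md ∧
      (Md : ℝ) = M * ∏ p ∈ A, (1 / (p : ℝ)) := by
    intro A hA'
    refine ⟨(∏ p ∈ P0 \ A, p) * ∏ p ∈ P1, p, ?_, good_sub hP0 hP1 hdis _ sdiff_subset, ?_⟩
    · rw [hMdef, ← prod_sdiff hA']; ring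
    · rw [hMdef, ← prod_sdiff hA']
      push_cast
      rw [prod_div_distrib]
      have : (∏ p ∈ A, (p : ℝ)) ≠ 0 := prod_ne_zero_iff.2 fun p hp => by
        exact_mod_cast (hP0 p (hA' hp)).ne_zero
      field_simp
      simp
  have hdpos : ∀ A ⊆ P0, 0 < ∏ p ∈ A, p := fun A hA' => prod_pos fun p hp => (hP0 p (hA' hp)).pos
  have hgmul : ∀ A ⊆ P0, ∀ m, gg 𝒜 ((∏ p ∈ A, p) * m) = gg 𝒜 m := by
    intro A hA' m
    apply gg_mul 𝒜 h𝒜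
    intro p hp
    apply Nat.Coprime.prod_right
    intro q hq
    exact (Nat.coprime_primes (hP1 p hp) (hP0 q (hA' hq))).2 (by
        rintro rfl; exact (disjoint_left.1 hdis) (hA' hq) hp)
  have hdlev : ∀ A ⊆ P0, A.card ≤ t → dv (∏ p ∈ A, p) ∈ Lev M D0 := by
    intro A hA' hc
    obtain ⟨Md, h1, _⟩ := hsubs A hA'
    exact dv_mem _ _ _ ⟨Md, h1⟩ (hdpos A hA') (hD0 A hA' hc)
  -- main term
  set K1 : ℕ → ℝ := ∑ i ∈ range t, ∑ A ∈ powersetCard i P0,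
    (-1 : ℝ) ^ i • (dv (∏ p ∈ A, p) * (gg 𝒜 - fun _ => 1)) with hK1
  have hK1lev : K1 ∈ Lev M (D0 * (R * R)) := by
    refine Submodule.sum_mem _ fun i hi => Submodule.sum_mem _ fun A hA' => Submodule.smul_mem _ _ ?_
    obtain ⟨ha, hb⟩ := mem_powersetCard.1 hA'
    exact lev_mul (hdlev A ha (by rw [hb]; exact (mem_range.1 hi).le)) (Submodule.sub_mem _ hgl hone)
  have hK1v : ∀ n, K1 n = (∑ i ∈ range t, (-1) ^ i * es P0 (fun p => dv p n) i) * (gg 𝒜 n - 1) := by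
    intro n
    rw [hK1]
    simp only [Finset.sum_apply, Pi.smul_apply, Pi.mul_apply, Pi.sub_apply, smul_eq_mul]
    rw [sum_mul]
    refine sum_congr rfl fun i _ => ?_
    unfold es
    rw [mul_sum, sum_mul]
    refine sum_congr rfl fun A hA' => ?_
    rw [prod_dv A (fun p hp => hP0 p ((mem_powersetCard.1 hA').1 hp))]
    ring
  have hK1c : ∀ ω : ℂ, ω ^ M = 1 → ‖∑ n ∈ range M, (K1 n : ℂ) * ω ^ n‖ ≤ (3 * WW P0 / Z) * M := by
    intro ω hω
    have h1 : ∑ n ∈ range M, (K1 n : ℂ) * ω ^ n = ∑ i ∈ range t, ∑ A ∈ powersetCard i P0,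
        (-1 : ℂ) ^ i * ∑ n ∈ range M, ((dv (∏ p ∈ A, p) n * (gg 𝒜 n - 1) : ℝ) : ℂ) * ω ^ n := by
      simp_rw [mul_sum]
      simp_rw [sum_comm (s := powersetCard _ P0) (t := range M)]
      rw [sum_comm]
      refine sum_congr rfl fun n _ => ?_
      rw [hK1]
      simp only [Finset.sum_apply, Pi.smul_apply, Pi.mul_apply, Pi.sub_apply, smul_eq_mul]
      push_cast
      rw [sum_mul]
      refine sum_congr rfl fun i _ => ?_
      rw [sum_mul]
      refine sum_congr rfl fun A _ => ?_
      ring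
    rw [h1]
    have h2 : ∀ i ∈ range t, ‖∑ A ∈ powersetCard i P0,
        (-1 : ℂ) ^ i * ∑ n ∈ range M, ((dv (∏ p ∈ A, p) n * (gg 𝒜 n - 1) : ℝ) : ℂ) * ω ^ n‖
        ≤ 3 / Z * M * es P0 (fun p => 1 / (p : ℝ)) i := by
      intro i _
      refine (norm_sum_le _ _).trans ?_
      unfold es
      rw [mul_sum]
      refine sum_le_sum fun A hA' => ?_
      obtain ⟨ha, hb⟩ := mem_powersetCard.1 hA'
      obtain ⟨Md, h3, h4, h5⟩ := hsubs A ha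
      rw [norm_mul, norm_pow, norm_neg, norm_one, one_pow, one_mul]
      rw [dv_reduce M Md _ (hdpos A ha) h3 (fun n => gg 𝒜 n - 1)
        (fun m => by rw [hgmul A ha])]
      refine (coef_bound hZ hPZ h4 𝒜 h𝒜 hdown hne _ ?_).trans ?_
      · rw [← pow_mul, ← h3, hω]
      · rw [h5, mul_assoc]
    refine (norm_sum_le_of_le _ h2).trans ?_
    rw [← mul_sum]
    have h3 := (es_sum_le P0 (fun p => 1 / (p : ℝ)) (fun p => by positivity) t).trans
      (prod_one_add_le P0 hP0)
    calc _ ≤ 3 / Z * M * WW P0 := mul_le_mul_of_nonneg_left h3 (by positivity)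
      _ = _ := by ring
  have hmain := trig_bound M _ N hM hD K1 hK1lev hN (3 * WW P0 / Z) (by positivity) hK1c ξ
  -- error term
  set K2 : ℕ → ℝ := ∑ A ∈ powersetCard t P0, dv (∏ p ∈ A, p) * (gg 𝒜 + fun _ => 1) with hK2
  have hK2lev : K2 ∈ Lev M (D0 * (R * R)) := by
    refine Submodule.sum_mem _ fun A hA' => ?_
    obtain ⟨ha, hb⟩ := mem_powersetCard.1 hA'
    exact lev_mul (hdlev A ha hb.le) (Submodule.add_mem _ hgl hone)
  have hK2v : ∀ n, K2 n = es P0 (fun p => dv p n) t * (gg 𝒜 n + 1) := by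
    intro n
    rw [hK2]
    simp only [Finset.sum_apply, Pi.mul_apply, Pi.add_apply]
    unfold es
    rw [sum_mul]
    refine sum_congr rfl fun A hA' => ?_
    rw [prod_dv A (fun p hp => hP0 p ((mem_powersetCard.1 hA').1 hp))]
  have hgn : ∀ n, 0 ≤ gg 𝒜 n := gg_nonneg hP1 𝒜 h𝒜 hne
  have hK2n : ∀ n, 0 ≤ K2 n := fun n => by
    rw [hK2v]
    exact mul_nonneg (es_nonneg _ _ (fun p => dv_nonneg p n) _) (by linarith [hgn n])
  have hK2m : ∑ n ∈ range M, K2 n = 2 * es P0 (fun p => 1 / (p : ℝ)) t * M := by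
    rw [hK2]
    simp only [Finset.sum_apply]
    rw [sum_comm]
    unfold es
    rw [mul_sum, sum_mul]
    refine sum_congr rfl fun A hA' => ?_
    obtain ⟨ha, hb⟩ := mem_powersetCard.1 hA'
    obtain ⟨Md, h3, h4, h5⟩ := hsubs A ha
    have h6 := dv_reduce M Md _ (hdpos A ha) h3 (fun n => gg 𝒜 n + 1)
        (fun m => by rw [hgmul A ha]) 1
    simp only [one_pow, mul_one] at h6
    simp only [Pi.mul_apply, Pi.add_apply]
    have h7 : ∑ n ∈ range M, dv (∏ p ∈ A, p) n * (gg 𝒜 n + 1) = ∑ m ∈ range Md, (gg 𝒜 m + 1) := by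
      exact_mod_cast h6
    rw [h7, sum_add_distrib, gg_mean h4 𝒜 h𝒜 hne]
    simp only [sum_const, card_range, nsmul_eq_mul, mul_one]
    rw [h5]; ring
  have hesn : 0 ≤ es P0 (fun p => 1 / (p : ℝ)) t := es_nonneg _ _ (fun p => by positivity) _
  have hK2c : ∀ ω : ℂ, ω ^ M = 1 → ‖∑ n ∈ range M, (K2 n : ℂ) * ω ^ n‖
      ≤ (2 * es P0 (fun p => 1 / (p : ℝ)) t) * M := by
    intro ω hω
    rw [← hK2m]
    refine norm_sum_le_of_le _ fun n _ => ?_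
    rw [norm_mul, norm_pow, Complex.norm_eq_one_of_pow_eq_one hω hM.ne', one_pow, mul_one,
      Complex.norm_real, Real.norm_eq_abs, abs_of_nonneg (hK2n n)]
  have herr := trig_bound M _ N hM hD K2 hK2lev hN _ (by positivity) hK2c 0
  have herr2 : ∑ n ∈ range N, K2 n ≤ 2 * (2 * es P0 (fun p => 1 / (p : ℝ)) t) * N := by
    refine le_trans ?_ herr
    simp only [mul_zero, ee_zero, mul_one]
    rw [← Complex.ofReal_sum, Complex.norm_real, Real.norm_eq_abs]
    exact le_abs_self _
  -- combine
  have hdec : ∑ n ∈ range N, ((LL P0 n * (gg 𝒜 n - 1) : ℝ) : ℂ) * ee (n * ξ)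
      = (WW P0 : ℂ) * ∑ n ∈ range N, (K1 n : ℂ) * ee (n * ξ)
      + (WW P0 : ℂ) * ∑ n ∈ range N, (((∏ p ∈ P0, (1 - dv p n)
        - ∑ i ∈ range t, (-1) ^ i * es P0 (fun p => dv p n) i) * (gg 𝒜 n - 1) : ℝ) : ℂ) * ee (n * ξ) := by
    rw [← mul_add, ← sum_add_distrib, mul_sum]
    refine sum_congr rfl fun n _ => ?_
    rw [hK1v]; unfold LL; push_cast; ring
  have herr3 : ‖∑ n ∈ range N, (((∏ p ∈ P0, (1 - dv p n)
        - ∑ i ∈ range t, (-1) ^ i * es P0 (fun p => dv p n) i) * (gg 𝒜 n - 1) : ℝ) : ℂ) * ee (n * ξ)‖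
      ≤ ∑ n ∈ range N, K2 n := by
    refine norm_sum_le_of_le _ fun n _ => ?_
    rw [norm_mul, norm_ee, mul_one, Complex.norm_real, Real.norm_eq_abs, abs_mul, hK2v]
    have h1 := bonferroni P0 (fun p => dv p n) (fun p => dv_nonneg p n) (fun p => dv_le_one p n) t
    have h2 : |gg 𝒜 n - 1| ≤ gg 𝒜 n + 1 := by
      rw [abs_le]; constructor <;> linarith [hgn n]
    exact mul_le_mul h1 h2 (abs_nonneg _) ((abs_nonneg _).trans h1)
  rw [hdec]
  refine (norm_add_le _ _).trans ?_
  rw [norm_mul, norm_mul, Complex.norm_real, Real.norm_eq_abs, abs_of_pos (by linarith)]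
  have h1 := mul_le_mul_of_nonneg_left hmain (by linarith : 0 ≤ WW P0)
  have h2 := mul_le_mul_of_nonneg_left (herr3.trans herr2) (by linarith : 0 ≤ WW P0)
  refine (add_le_add h1 h2).trans (le_of_eq ?_)
  ring

end PM

namespace PM
open Finset

/-- Primes up to `Z`. -/
def PU (Z : ℕ) : Finset ℕ := (range (Z + 1)).filter Nat.Prime
/-- Primes in `(Z, R]`. -/
def PQ (Z R : ℕ) : Finset ℕ := (Ioc Z R).filter Nat.Prime

theorem PU_prime {Z p : ℕ} (h : p ∈ PU Z) : p.Prime := (mem_filter.1 h).2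
theorem PQ_prime {Z R p : ℕ} (h : p ∈ PQ Z R) : p.Prime := (mem_filter.1 h).2
theorem PQ_gt {Z R p : ℕ} (h : p ∈ PQ Z R) : Z < p := (mem_Ioc.1 (mem_filter.1 h).1).1
theorem PQ_le {Z R p : ℕ} (h : p ∈ PQ Z R) : p ≤ R := (mem_Ioc.1 (mem_filter.1 h).1).2
theorem PU_le {Z p : ℕ} (h : p ∈ PU Z) : p ≤ Z := by
  have := mem_range.1 (mem_filter.1 h).1; omega
theorem PU_disj (Z R : ℕ) : Disjoint (PU Z) (PQ Z R) := by
  rw [disjoint_left]; intro p h1 h2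
  have := PU_le h1; have := PQ_gt h2; omega
theorem PU_union {Z R : ℕ} (h : Z ≤ R) : PU R = PU Z ∪ PQ Z R := by
  ext p; simp only [PU, PQ, mem_union, mem_filter, mem_range, mem_Ioc]
  constructor
  · rintro ⟨h1, h2⟩
    by_cases h3 : p ≤ Z
    · left; exact ⟨by omega, h2⟩
    · right; exact ⟨by omega, h2⟩
  · rintro (⟨h1, h2⟩ | ⟨h1, h2⟩) <;> exact ⟨by omega, h2⟩

theorem WW_union {Z R : ℕ} (h : Z ≤ R) : WW (PU R) = WW (PU Z) * WW (PQ Z R) := by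
  unfold WW; rw [PU_union h, prod_union (PU_disj Z R)]

theorem dyadic_prod (m : ℕ) : ∏ p ∈ PQ m (2 * m), p ≤ 4 ^ m := by
  have h1 : ∏ p ∈ PQ m (2 * m), p ∣ Nat.choose (2 * m) m := by
    apply Finset.prod_primes_dvd
    · intro p hp; exact (PQ_prime hp).prime
    · intro p hp
      apply Nat.Prime.dvd_choose (PQ_prime hp) (PQ_gt hp) _ (PQ_le hp)
      have := PQ_gt hp; omega
  refine (Nat.le_of_dvd (Nat.choose_pos (by omega)) h1).trans ?_
  refine (Nat.choose_le_two_pow _ _).trans ?_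
  rw [pow_mul]; norm_num

theorem dyadic_count (j : ℕ) : j * (PQ (2 ^ j) (2 ^ (j + 1))).card ≤ 2 * 2 ^ j := by
  have h1 := dyadic_prod (2 ^ j)
  rw [show 2 * 2 ^ j = 2 ^ (j + 1) by ring] at h1
  have h2 : (2 ^ j) ^ (PQ (2 ^ j) (2 ^ (j + 1))).card ≤ ∏ p ∈ PQ (2 ^ j) (2 ^ (j + 1)), p := by
    apply Finset.pow_card_le_prod
    intro p hp; exact (PQ_gt hp).le
  have h3 := h2.trans h1
  rw [← pow_mul, show (4 : ℕ) = 2 ^ 2 by norm_num, ← pow_mul] at h3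
  exact (Nat.pow_le_pow_iff_right (by norm_num : 1 < 2)).1 h3

theorem WW_step (j : ℕ) (hj : 1 ≤ j) :
    WW (PQ (2 ^ j) (2 ^ (j + 1))) ≤ Real.exp (2 / j) := by
  set n := (PQ (2 ^ j) (2 ^ (j + 1))).card with hn
  have hjr : (0 : ℝ) < j := by exact_mod_cast hj
  have h1 : WW (PQ (2 ^ j) (2 ^ (j + 1))) ≤ ∏ p ∈ PQ (2 ^ j) (2 ^ (j + 1)), Real.exp (1 / 2 ^ j) := by
    unfold WW
    refine prod_le_prod (fun p hp => ?_) (fun p hp => ?_)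
    · have := pm1_pos (PQ_prime hp); positivity
    · have h2 := pm1_pos (PQ_prime hp)
      have h3 : (2 ^ j : ℝ) ≤ (p : ℝ) - 1 := by
        have : 2 ^ j + 1 ≤ p := PQ_gt hp
        have : ((2 ^ j + 1 : ℕ) : ℝ) ≤ p := by exact_mod_cast this
        push_cast at this; linarith
      have h4 : (p : ℝ) / ((p : ℝ) - 1) = 1 / ((p : ℝ) - 1) + 1 := by field_simp; ring
      rw [h4]
      have h5 : 1 / ((p : ℝ) - 1) ≤ 1 / 2 ^ j := one_div_le_one_div_of_le (by positivity) h3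
      linarith [Real.add_one_le_exp ((1 : ℝ) / 2 ^ j)]
  refine h1.trans ?_
  rw [prod_const, ← Real.exp_nat_mul, Real.exp_le_exp, ← hn]
  have h6 : ((j * n : ℕ) : ℝ) ≤ ((2 * 2 ^ j : ℕ) : ℝ) := by exact_mod_cast dyadic_count j
  push_cast at h6
  rw [mul_one_div, div_le_div_iff₀ (by positivity) hjr]
  linarith

theorem WW_bound (j : ℕ) (hj : 1 ≤ j) : WW (PU (2 ^ j)) ≤ 16 * (j : ℝ) ^ 2 := by
  have key : WW (PU (2 ^ j)) ≤ 2 * (j : ℝ) ^ 2 * Real.exp (2 - 2 / j) := by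
    induction j, hj using Nat.le_induction with
    | base =>
      have : PU (2 ^ 1) = {2} := by decide
      rw [this]; simp [WW]; norm_num
    | succ j hj ih =>
      have hjr : (0 : ℝ) < j := by exact_mod_cast hj
      rw [WW_union (Nat.pow_le_pow_right (by norm_num) (Nat.le_succ j))]
      have h1 := WW_step j hj
      have h2 : WW (PU (2 ^ j)) * WW (PQ (2 ^ j) (2 ^ (j + 1))) ≤
          (2 * (j : ℝ) ^ 2 * Real.exp (2 - 2 / j)) * Real.exp (2 / j) := by
        apply mul_le_mul ih h1 _ (by positivity)
        exact le_trans zero_le_one (WW_ge_one _ fun p hp => PQ_prime hp)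
      refine h2.trans ?_
      rw [mul_assoc, ← Real.exp_add]
      have h3 : (j : ℝ) ≤ ((j : ℝ) + 1) * Real.exp (-(1 / ((j : ℝ) + 1))) := by
        have := Real.add_one_le_exp (-(1 / ((j : ℝ) + 1)))
        have h4 : (j : ℝ) = ((j : ℝ) + 1) * (-(1 / ((j : ℝ) + 1)) + 1) := by field_simp; ring
        calc (j : ℝ) = _ := h4
          _ ≤ _ := by gcongr
      have h5 : (j : ℝ) ^ 2 ≤ (((j : ℝ) + 1) * Real.exp (-(1 / ((j : ℝ) + 1)))) ^ 2 :=
        pow_le_pow_left₀ hjr.le h3 2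
      rw [mul_pow, ← Real.exp_nat_mul] at h5
      push_cast
      have h6 : Real.exp (2 - 2 / ((j : ℝ) + 1)) = Real.exp 2 * Real.exp (2 * -(1 / ((j : ℝ) + 1))) := by
        rw [← Real.exp_add]; congr 1; ring
      rw [h6, show (2 - 2 / (j : ℝ) + 2 / j) = 2 by ring]
      push_cast at h5
      have := mul_le_mul_of_nonneg_left h5 (by positivity : (0:ℝ) ≤ 2 * Real.exp 2)
      linarith
  refine key.trans ?_
  have hjr : (0 : ℝ) < j := by exact_mod_cast hj
  have h1 : Real.exp (2 - 2 / j) ≤ 8 := by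
    have h2 : Real.exp (2 - 2 / j) ≤ Real.exp 1 ^ 2 := by
      rw [← Real.exp_nat_mul, Real.exp_le_exp]
      have : (0 : ℝ) < 2 / j := by positivity
      push_cast; linarith
    have := Real.exp_one_lt_d9
    have h0 := Real.exp_pos 1
    nlinarith
  have : (0 : ℝ) ≤ 2 * (j : ℝ) ^ 2 := by positivity
  nlinarith

/-- Index family for the Selberg weight. -/
def AF (Z R : ℕ) : Finset (Finset ℕ) := (PQ Z R).powerset.filter (fun A => ∏ p ∈ A, p ≤ R)

theorem AF_sub {Z R : ℕ} {A : Finset ℕ} (h : A ∈ AF Z R) : A ⊆ PQ Z R :=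
  mem_powerset.1 (mem_filter.1 h).1
theorem AF_le {Z R : ℕ} {A : Finset ℕ} (h : A ∈ AF Z R) : ∏ p ∈ A, p ≤ R := (mem_filter.1 h).2
theorem AF_down {Z R : ℕ} : ∀ A ∈ AF Z R, ∀ B ⊆ A, B ∈ AF Z R := by
  intro A h B hB
  refine mem_filter.2 ⟨mem_powerset.2 (hB.trans (AF_sub h)), le_trans ?_ (AF_le h)⟩
  exact prod_le_prod_of_subset_of_one_le' hB fun p hp _ => (PQ_prime (AF_sub h hp)).one_lt.le
theorem AF_empty {Z R : ℕ} (hR : 1 ≤ R) : ∅ ∈ AF Z R := by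
  simp [AF, hR]

theorem sum_inv_sq (R : ℕ) : ∑ b ∈ Icc 1 R, 1 / (b : ℝ) ^ 2 ≤ 2 := by
  have key : ∀ R : ℕ, ∑ b ∈ Icc 1 (R + 1), 1 / (b : ℝ) ^ 2 ≤ 2 - 1 / ((R : ℝ) + 1) := by
    intro R
    induction R with
    | zero => norm_num
    | succ R ih =>
      rw [sum_Icc_succ_top (by omega)]
      push_cast
      have : 1 / ((R : ℝ) + 1 + 1) ^ 2 ≤ 1 / ((R : ℝ) + 1) - 1 / ((R : ℝ) + 1 + 1) := by
        rw [div_sub_div _ _ (by positivity) (by positivity), div_le_div_iff₀ (by positivity) (by positivity)]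
        nlinarith [(Nat.cast_nonneg R : (0:ℝ) ≤ R)]
      linarith
  cases R with
  | zero => simp
  | succ R =>
    have : (0 : ℝ) ≤ 1 / ((R : ℝ) + 1) := by positivity
    linarith [key R]

theorem gA_powerset (P : Finset ℕ) (hP : ∀ p ∈ P, p.Prime) : ∑ A ∈ P.powerset, gA A = WW P := by
  unfold gA WW
  rw [← prod_one_add]
  refine prod_congr rfl fun p hp => ?_
  have := pm1_pos (hP p hp)
  field_simp; ring

theorem GG_lower (Z R : ℕ) (hR : 1 ≤ R) :
    Real.log R ≤ 2 * (WW (PU Z) * GG (AF Z R)) := by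
  classical
  have hlog : Real.log R ≤ ∑ m ∈ Icc 1 R, 1 / (m : ℝ) := by
    have h1 := log_add_one_le_harmonic R
    have h2 : Real.log R ≤ Real.log ((R + 1 : ℕ) : ℝ) := by
      apply Real.log_le_log (by exact_mod_cast hR); push_cast; linarith
    refine (h2.trans h1).trans (le_of_eq ?_)
    rw [harmonic_eq_sum_Icc]
    push_cast
    simp
  have hch : ∀ m : ℕ, ∃ q b : ℕ, b ^ 2 * q = m ∧ Squarefree q := fun m => by
    obtain ⟨a, b, h1, h2⟩ := Nat.sq_mul_squarefree m
    exact ⟨a, b, h1, h2⟩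
  choose q b hqb hsq using hch
  let ι : ℕ → (Finset ℕ × Finset ℕ) × ℕ := fun m =>
    (((q m).primeFactors.filter (· ≤ Z), (q m).primeFactors.filter (fun p => ¬ p ≤ Z)), b m)
  have hrec : ∀ m, m = (ι m).2 ^ 2 * ((∏ p ∈ (ι m).1.1, p) * ∏ p ∈ (ι m).1.2, p) := by
    intro m
    simp only [ι]
    rw [prod_filter_mul_prod_filter_not, Nat.prod_primeFactors_of_squarefree (hsq m), hqb]
  have hinj : Set.InjOn ι (Icc 1 R) := by
    intro m _ m' _ h
    rw [hrec m, hrec m', h]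
  let T : Finset ((Finset ℕ × Finset ℕ) × ℕ) := ((PU Z).powerset ×ˢ AF Z R) ×ˢ Icc 1 R
  let w : (Finset ℕ × Finset ℕ) × ℕ → ℝ := fun t => gA t.1.1 * gA t.1.2 * (1 / (t.2 : ℝ) ^ 2)
  have hmaps : ∀ m ∈ Icc 1 R, ι m ∈ T := by
    intro m hm
    rw [mem_Icc] at hm
    have hm0 : m ≠ 0 := by omega
    have hb0 : b m ≠ 0 := by
      intro h; have := hqb m; rw [h] at this; simp at this; omega
    have hq0 : q m ≠ 0 := (hsq m).ne_zero
    have hbR : b m ≤ R := by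
      have h2 : b m ∣ m := ⟨b m * q m, by rw [← mul_assoc, ← sq, hqb]⟩
      exact (Nat.le_of_dvd (by omega) h2).trans hm.2
    have hqR : q m ≤ R := by
      have h2 : q m ∣ m := ⟨b m ^ 2, by rw [mul_comm, hqb]⟩
      exact (Nat.le_of_dvd (by omega) h2).trans hm.2
    simp only [T, ι, mem_product, mem_powerset, mem_Icc]
    refine ⟨⟨?_, ?_⟩, by omega, hbR⟩
    · intro p hp
      rw [mem_filter] at hp
      exact mem_filter.2 ⟨mem_range.2 (by omega), Nat.prime_of_mem_primeFactors hp.1⟩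
    · refine mem_filter.2 ⟨mem_powerset.2 ?_, ?_⟩
      · intro p hp
        rw [mem_filter] at hp
        have := Nat.le_of_dvd (Nat.pos_of_ne_zero hq0) (Nat.dvd_of_mem_primeFactors hp.1)
        exact mem_filter.2 ⟨mem_Ioc.2 ⟨by omega, by omega⟩, Nat.prime_of_mem_primeFactors hp.1⟩
      · refine le_trans ?_ hqR
        conv_rhs => rw [← Nat.prod_primeFactors_of_squarefree (hsq m)]
        exact prod_le_prod_of_subset_of_one_le' (filter_subset _ _)
          fun p hp _ => (Nat.prime_of_mem_primeFactors hp).one_lt.le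
  have hgle : ∀ A : Finset ℕ, (∀ p ∈ A, p.Prime) → 1 / ((∏ p ∈ A, p : ℕ) : ℝ) ≤ gA A := by
    intro A hA'
    unfold gA
    push_cast
    rw [one_div, ← prod_inv_distrib]
    refine prod_le_prod (fun p _ => by positivity) fun p hp => ?_
    have := pm1_pos (hA' p hp)
    rw [← one_div]
    exact one_div_le_one_div_of_le this (by linarith)
  have hwn : ∀ t ∈ T, 0 ≤ w t := by
    intro t ht
    simp only [T, mem_product, mem_powerset] at ht
    have h1 := gA_nonneg (fun p hp => PU_prime hp) ht.1.1
    have h2 := gA_nonneg (fun p hp => PQ_prime hp) (AF_sub ht.1.2)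
    simp only [w]; positivity
  have h1 : ∑ m ∈ Icc 1 R, 1 / (m : ℝ) ≤ ∑ m ∈ Icc 1 R, w (ι m) := by
    refine sum_le_sum fun m hm => ?_
    have hT := hmaps m hm
    simp only [T, mem_product, mem_powerset] at hT
    have a1 := hgle (ι m).1.1 (fun p hp => PU_prime (hT.1.1 hp))
    have a2 := hgle (ι m).1.2 (fun p hp => PQ_prime (AF_sub hT.1.2 hp))
    have e : (1 : ℝ) / m = 1 / ((∏ p ∈ (ι m).1.1, p : ℕ) : ℝ) * (1 / ((∏ p ∈ (ι m).1.2, p : ℕ) : ℝ))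
        * (1 / ((ι m).2 : ℝ) ^ 2) := by
      conv_lhs => rw [hrec m]
      push_cast
      rw [one_div_mul_one_div, one_div_mul_one_div]
      congr 1; ring
    rw [e]
    simp only [w]
    apply mul_le_mul_of_nonneg_right _ (by positivity)
    exact mul_le_mul a1 a2 (by positivity) (le_trans (by positivity) a1)
  have h2 : ∑ m ∈ Icc 1 R, w (ι m) ≤ ∑ t ∈ T, w t := by
    rw [← sum_image hinj]
    refine sum_le_sum_of_subset_of_nonneg ?_ fun t ht _ => hwn t ht
    intro t ht
    obtain ⟨m, hm, rfl⟩ := mem_image.1 ht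
    exact hmaps m hm
  have h3 : ∑ t ∈ T, w t = WW (PU Z) * GG (AF Z R) * ∑ b ∈ Icc 1 R, 1 / (b : ℝ) ^ 2 := by
    simp only [T, w]
    rw [sum_product, sum_product]
    simp_rw [← mul_sum]
    rw [← gA_powerset (PU Z) (fun p hp => PU_prime hp)]
    unfold GG
    rw [sum_mul_sum, sum_mul]
    refine sum_congr rfl fun A _ => ?_
    rw [sum_mul]
  have hpos : 0 ≤ WW (PU Z) * GG (AF Z R) := by
    have a := WW_ge_one (PU Z) (fun p hp => PU_prime hp)
    have b := GG_ge_one (P := PQ Z R) (fun p hp => PQ_prime hp) (AF Z R) (fun A h => AF_sub h) (AF_empty hR)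
    positivity
  have h4 := mul_le_mul_of_nonneg_left (sum_inv_sq R) hpos
  linarith

end PM

namespace PM
open Finset

theorem pi_lower (K : ℕ) (hK : 1 ≤ K) : (2 : ℝ) ^ K / (8 * K) ≤ ((PU (2 ^ K)).card : ℝ) := by
  have hcard : (PU (2 ^ K)).card = Nat.primeCounting (2 ^ K) := by
    unfold PU Nat.primeCounting Nat.primeCounting'
    rw [Nat.count_eq_card_filter_range]
  rcases Nat.eq_or_lt_of_le hK with h | h
  · subst h
    have : PU (2 ^ 1) = {2} := by decide
    rw [this]; norm_num
  · have h1 := Chebyshev.pi_ge (2 ^ K)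
    rw [hcard]
    refine le_trans ?_ h1
    have hKr : (2 : ℝ) ≤ K := by exact_mod_cast h
    have hl2 : 0 < Real.log 2 := Real.log_pos (by norm_num)
    push_cast
    rw [Real.log_pow]
    have h2 : Real.log ((2 : ℝ) ^ K + 1) ≤ (K + 1) * Real.log 2 := by
      have : Real.log ((2 : ℝ) ^ K + 1) ≤ Real.log (2 ^ (K + 1)) := by
        apply Real.log_le_log (by positivity)
        have : (1 : ℝ) ≤ 2 ^ K := one_le_pow₀ (by norm_num)
        rw [pow_succ]; linarith
      rw [Real.log_pow] at this
      push_cast at this; exact this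
    have h3 : (K + 1 : ℝ) ≤ 7 / 8 * 2 ^ K := by
      have key : ∀ m : ℕ, 2 ≤ m → (m + 1 : ℝ) ≤ 7 / 8 * 2 ^ m := by
        intro m hm
        induction m, hm using Nat.le_induction with
        | base => norm_num
        | succ m hm ih =>
          have : (2 : ℝ) ≤ m := by exact_mod_cast hm
          push_cast; rw [pow_succ]; linarith
      exact key K h
    rw [div_le_div_iff₀ (by positivity) (by positivity)]
    have h4 : Real.log ((2 : ℝ) ^ K + 1) ≤ 7 / 8 * 2 ^ K * Real.log 2 :=
      h2.trans (mul_le_mul_of_nonneg_right h3 hl2.le)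
    have h5 : (2 : ℝ) ^ K * Real.log 2 ≤ (2 ^ K * Real.log 2 - Real.log (2 ^ K + 1)) * 8 := by linarith
    have := mul_le_mul_of_nonneg_right h5 (by linarith : (0 : ℝ) ≤ K)
    linarith

/-- Dyadic prime average. -/
noncomputable def MM (f : ℤ → ℝ) (k : ℕ) (x : ℤ) : ℝ :=
  (k / 2 ^ k) * ∑ p ∈ PQ (2 ^ (k - 1)) (2 ^ k), f (x + p)

theorem reduce_dyadic (f : ℤ → ℝ) (hf : ∀ x, 0 ≤ f x) (x : ℤ) (μ : ℝ) (hμ : 0 ≤ μ)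
    (h : ∀ k, 1 ≤ k → MM f k x ≤ μ) (N : ℕ) (hN : 2 ≤ N) :
    ((PU N).card : ℝ)⁻¹ * ∑ p ∈ PU N, f (x + p) ≤ 64 * μ := by
  have hd : ∀ k : ℕ, 1 ≤ k → ∑ p ∈ PQ (2 ^ (k - 1)) (2 ^ k), f (x + p) ≤ μ * 2 ^ k / k := by
    intro k hk
    have hkr : (0 : ℝ) < k := by exact_mod_cast hk
    have := h k hk
    unfold MM at this
    rw [le_div_iff₀ hkr]
    have h2 := mul_le_mul_of_nonneg_right this (by positivity : (0:ℝ) ≤ 2 ^ k)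
    refine le_trans (le_of_eq ?_) h2
    field_simp
  have hs : ∀ m : ℕ, ∑ p ∈ PU (2 ^ (m + 1)), f (x + p) ≤
      ∑ p ∈ PU (2 ^ m), f (x + p) + μ * 2 ^ (m + 1) / (m + 1 : ℕ) := by
    intro m
    rw [PU_union (Nat.pow_le_pow_right (by norm_num) (Nat.le_succ m)), sum_union (PU_disj _ _)]
    have := hd (m + 1) (by omega)
    rw [Nat.add_sub_cancel] at this
    linarith
  have hS : ∀ m : ℕ, 2 ≤ m → ∑ p ∈ PU (2 ^ m), f (x + p) ≤ 4 * μ * 2 ^ m / m := by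
    intro m hm
    induction m, hm using Nat.le_induction with
    | base =>
      have h0 := hs 0
      have h1 := hs 1
      have h00 : PU (2 ^ 0) = ∅ := by decide
      rw [h00, sum_empty] at h0
      norm_num at h0 h1 ⊢
      linarith
    | succ m hm ih =>
      have h1 := hs m
      have hmr : (2 : ℝ) ≤ m := by exact_mod_cast hm
      refine h1.trans ((add_le_add_left ih _).trans ?_)
      push_cast
      have h2 : (2 : ℝ) / m ≤ 3 / (m + 1) := by
        rw [div_le_div_iff₀ (by positivity) (by positivity)]; linarith
      have h3 := mul_le_mul_of_nonneg_left h2 (by positivity : 0 ≤ 2 * μ * 2 ^ m)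
      have e1 : 4 * μ * 2 ^ m / m = 2 * μ * 2 ^ m * (2 / m) := by ring
      have e2 : 4 * μ * 2 ^ (m + 1) / (m + 1 : ℝ) - μ * 2 ^ (m + 1) / (m + 1 : ℝ)
        = 2 * μ * 2 ^ m * (3 / (m + 1)) := by rw [pow_succ]; ring
      linarith
  set K := Nat.log 2 N with hK
  have hK1 : 1 ≤ K := Nat.log_pos (by norm_num) hN
  have hKN : 2 ^ K ≤ N := Nat.pow_log_le_self 2 (by omega)
  have hNK : N < 2 ^ (K + 1) := Nat.lt_pow_succ_log_self (by norm_num) N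
  have hmono : ∀ a b, a ≤ b → PU a ⊆ PU b := by
    intro a b hab; rw [PU_union hab]; exact subset_union_left
  have h1 : ∑ p ∈ PU N, f (x + p) ≤ 4 * μ * 2 ^ (K + 1) / (K + 1 : ℕ) :=
    (sum_le_sum_of_subset_of_nonneg (hmono _ _ hNK.le) fun _ _ _ => hf _).trans (hS (K + 1) (by omega))
  have h2 : (2 : ℝ) ^ K / (8 * K) ≤ ((PU N).card : ℝ) :=
    (pi_lower K hK1).trans (by exact_mod_cast card_le_card (hmono _ _ hKN))
  have hKr : (1 : ℝ) ≤ K := by exact_mod_cast hK1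
  have h3 : (0 : ℝ) < (2 : ℝ) ^ K / (8 * K) := by positivity
  rw [inv_mul_le_iff₀ (by linarith)]
  refine h1.trans ?_
  have h4 := mul_le_mul_of_nonneg_right h2 (by positivity : 0 ≤ 64 * μ)
  refine le_trans ?_ h4
  push_cast
  have h5 : (1 : ℝ) / (K + 1) ≤ 1 / K := one_div_le_one_div_of_le (by positivity) (by linarith)
  have h6 := mul_le_mul_of_nonneg_left h5 (by positivity : 0 ≤ 8 * μ * 2 ^ K)
  have e1 : 4 * μ * 2 ^ (K + 1) / ((K : ℝ) + 1) = 8 * μ * 2 ^ K * (1 / (K + 1)) := by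
    rw [pow_succ]; ring
  have e2 : (2 : ℝ) ^ K / (8 * K) * (64 * μ) = 8 * μ * 2 ^ K * (1 / K) := by field_simp; ring
  rw [e1, e2]; exact h6

/-- Pointwise domination of the primes by the sieve weight. -/
theorem prime_dom (j k n : ℕ) (hk20 : 20 ≤ k) (hjk : j + 1 ≤ k) (hn : n ∈ PQ (2 ^ (k - 1)) (2 ^ k)) :
    (k : ℝ) ≤ 120 * (LL (PU (2 ^ j)) n * gg (AF (2 ^ j) (2 ^ (k / 20))) n) := by
  have hp := PQ_prime hn
  have hgt := PQ_gt hn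
  set R := 2 ^ (k / 20) with hR
  have hR1 : 1 ≤ R := Nat.one_le_two_pow
  have hRle : R ≤ 2 ^ (k - 1) := Nat.pow_le_pow_right (by norm_num) (by omega)
  have hjle : 2 ^ j ≤ 2 ^ (k - 1) := Nat.pow_le_pow_right (by norm_num) (by omega)
  have hnd : ∀ q, q.Prime → q ≤ 2 ^ (k - 1) → ¬ q ∣ n := by
    intro q hq hle hd
    have := (Nat.prime_dvd_prime_iff_eq hq hp).1 hd
    omega
  have hGG := GG_ge_one (P := PQ (2 ^ j) R) (fun p hp => PQ_prime hp) (AF (2 ^ j) R)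
    (fun A h => AF_sub h) (AF_empty hR1)
  have h1 : gg (AF (2 ^ j) R) n = GG (AF (2 ^ j) R) := by
    apply gg_coprime _ _ _ (by linarith)
    intro A hA' p hp'
    exact hnd p (PQ_prime (AF_sub hA' hp')) ((PQ_le (AF_sub hA' hp')).trans hRle)
  have h2 : LL (PU (2 ^ j)) n = WW (PU (2 ^ j)) := by
    unfold LL
    rw [prod_eq_one, mul_one]
    intro p hp'
    unfold dv
    rw [if_neg (hnd p (PU_prime hp') ((PU_le hp').trans hjle))]; norm_num
  rw [h1, h2]
  have h3 := GG_lower (2 ^ j) R hR1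
  have h4 : Real.log R = (k / 20 : ℕ) * Real.log 2 := by
    rw [hR]; push_cast; rw [Real.log_pow]
  have h5 : (k : ℝ) ≤ 40 * ((k / 20 : ℕ) : ℝ) := by
    have : k ≤ 40 * (k / 20) := by omega
    exact_mod_cast this
  have h6 := Real.log_two_gt_d9
  have h7 : (0 : ℝ) ≤ ((k / 20 : ℕ) : ℝ) := by positivity
  rw [h4] at h3
  nlinarith

end PM

namespace PM
open Finset

theorem LL_nonneg (Z n : ℕ) : 0 ≤ LL (PU Z) n := by
  unfold LL
  have := WW_ge_one (PU Z) (fun p hp => PU_prime hp)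
  exact mul_nonneg (by linarith) (prod_nonneg fun p _ => by linarith [dv_le_one p n])

theorem LL_le (Z n : ℕ) : LL (PU Z) n ≤ WW (PU Z) := by
  unfold LL
  have := WW_ge_one (PU Z) (fun p hp => PU_prime hp)
  apply mul_le_of_le_one_right (by linarith)
  exact prod_le_one (fun p _ => by linarith [dv_le_one p n]) (fun p _ => by linarith [dv_nonneg p n])

theorem LL_shift (P : Finset ℕ) (v : ℕ) (hv : ∀ p ∈ P, p ∣ v) (n : ℕ) : LL P (n + v) = LL P n := by
  unfold LL dv
  congr 1
  refine prod_congr rfl fun p hp => ?_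
  simp only [Nat.dvd_add_left (hv p hp)]

theorem gg_full (P : Finset ℕ) (hP : ∀ p ∈ P, p.Prime) (n : ℕ) : gg P.powerset n = LL P n := by
  have h1 : SS P.powerset n = LL P n := by
    unfold SS hA LL WW
    rw [← prod_one_add, ← prod_mul_distrib]
    refine prod_congr rfl fun p hp => ?_
    have := pm1_pos (hP p hp)
    rw [hh_eq (hP p hp)]
    field_simp; ring
  have h2 : GG P.powerset = WW P := gA_powerset P hP
  have hW := WW_ge_one P hP
  unfold gg
  rw [h1, h2]
  unfold LL
  have h3 : (∏ p ∈ P, (1 - dv p n)) ^ 2 = ∏ p ∈ P, (1 - dv p n) := by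
    rw [← prod_pow]
    refine prod_congr rfl fun p _ => ?_
    unfold dv; split_ifs <;> norm_num
  rw [mul_pow, h3]
  field_simp

/-- Difference of consecutive sieve weights. -/
noncomputable def dd (i n : ℕ) : ℝ := LL (PU (2 ^ (i + 1))) n - LL (PU (2 ^ i)) n

theorem LL_union {Z R : ℕ} (h : Z ≤ R) (n : ℕ) : LL (PU R) n = LL (PU Z) n * LL (PQ Z R) n := by
  unfold LL
  rw [WW_union h, PU_union h, prod_union (PU_disj Z R)]; ring

theorem dd_eq (i n : ℕ) :
    dd i n = LL (PU (2 ^ i)) n * (gg (PQ (2 ^ i) (2 ^ (i + 1))).powerset n - 1) := by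
  rw [gg_full _ (fun p hp => PQ_prime hp)]
  unfold dd
  rw [LL_union (Nat.pow_le_pow_right (by norm_num) (Nat.le_succ i))]; ring

def PP (j : ℕ) : ℕ := ∏ p ∈ PU (2 ^ j), p
def Lp (j : ℕ) : ℕ := PP j ^ 8

theorem PP_pos (j : ℕ) : 0 < PP j := prod_pos fun _ hp => (PU_prime hp).pos
theorem Lp_pos (j : ℕ) : 0 < Lp j := pow_pos (PP_pos j) 8

theorem PU_mono {a b : ℕ} (hab : a ≤ b) : PU a ⊆ PU b := by
  rw [PU_union hab]; exact subset_union_left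

theorem Lp_dvd {i j : ℕ} (h : i ≤ j) : Lp i ∣ Lp j := by
  apply pow_dvd_pow_of_dvd
  exact prod_dvd_prod_of_subset _ _ _ (PU_mono (Nat.pow_le_pow_right (by norm_num) h))

theorem dvd_Lp {i j p : ℕ} (h : i ≤ j) (hp : p ∈ PU (2 ^ i)) : p ∣ Lp j := by
  refine dvd_trans ?_ (dvd_pow_self (PP j) (by norm_num : 8 ≠ 0))
  exact dvd_prod_of_mem _ (PU_mono (Nat.pow_le_pow_right (by norm_num) h) hp)

theorem dd_shift (i n : ℕ) : dd i (n + Lp (i + 1)) = dd i n := by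
  unfold dd
  rw [LL_shift _ _ (fun p hp => dvd_Lp le_rfl hp), LL_shift _ _ (fun p hp => dvd_Lp (Nat.le_succ i) hp)]

theorem Lp_le (j : ℕ) : Lp j ≤ 2 ^ (16 * 2 ^ j) := by
  have h1 : PP j ≤ 4 ^ (2 ^ j) := primorial_le_four_pow (2 ^ j)
  calc Lp j ≤ (4 ^ (2 ^ j)) ^ 8 := Nat.pow_le_pow_left h1 8
    _ = 2 ^ (16 * 2 ^ j) := by
      rw [show (4 : ℕ) = 2 ^ 2 by norm_num, ← pow_mul, ← pow_mul]; congr 1; ring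

noncomputable def eps (j : ℕ) : ℝ :=
  6 * WW (PU (2 ^ j)) ^ 2 / 2 ^ j + 4 * WW (PU (2 ^ j)) ^ 17 / 16 ^ j

theorem tower_trig (i : ℕ) (ξ : ℝ) :
    ‖∑ n ∈ range (Lp (i + 1)), ((dd i n : ℝ) : ℂ) * ee (n * ξ)‖ ≤ eps i * Lp (i + 1) := by
  have hle : 2 ^ i ≤ 2 ^ (i + 1) := Nat.pow_le_pow_right (by norm_num) (Nat.le_succ i)
  have h1 := single (P0 := PU (2 ^ i)) (P1 := PQ (2 ^ i) (2 ^ (i + 1))) (Z := 2 ^ i) (by positivity)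
    (fun p hp => PU_prime hp) (fun p hp => PQ_prime hp) (PU_disj _ _) (fun p hp => PQ_gt hp)
    (PQ (2 ^ i) (2 ^ (i + 1))).powerset (fun A hA' => mem_powerset.1 hA')
    (fun A hA' B hB => mem_powerset.2 (hB.trans (mem_powerset.1 hA'))) (empty_mem_powerset _)
    ((PU (2 ^ i)).card + 1) (∏ p ∈ PU (2 ^ i), p) (∏ p ∈ PQ (2 ^ i) (2 ^ (i + 1)), p) (Lp (i + 1))
    (fun A hA' _ => prod_le_prod_of_subset_of_one_le' hA' fun p hp _ => (PU_prime hp).one_lt.le)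
    (fun A hA' => prod_le_prod_of_subset_of_one_le' (mem_powerset.1 hA')
      fun p hp _ => (PQ_prime hp).one_lt.le)
    (by
      unfold Lp PP
      rw [PU_union hle, prod_union (PU_disj _ _), show 8 = 2 * 4 by norm_num, pow_mul]
      apply Nat.pow_le_pow_left
      have h1 : 1 ≤ ∏ p ∈ PU (2 ^ i), p := prod_pos fun _ hp => (PU_prime hp).pos
      set a := ∏ p ∈ PU (2 ^ i), p
      set b := ∏ p ∈ PQ (2 ^ i) (2 ^ (i + 1)), p
      nlinarith [Nat.zero_le (b * b), Nat.mul_le_mul_right (a * (b * b)) h1]) ξ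
  simp only [← dd_eq] at h1
  refine h1.trans ?_
  rw [es_top]
  unfold eps
  have hW := WW_ge_one (PU (2 ^ i)) (fun p hp => PU_prime hp)
  have : 0 ≤ 4 * WW (PU (2 ^ i)) ^ 17 / 16 ^ i := by positivity
  apply mul_le_mul_of_nonneg_right _ (by positivity)
  push_cast; linarith

theorem scale_trig (j k N : ℕ) (hjk : 20 * j ^ 2 ≤ k) (hN : 2 ^ k ≤ N) (ξ : ℝ) :
    ‖∑ n ∈ range N, ((LL (PU (2 ^ j)) n * (gg (AF (2 ^ j) (2 ^ (k / 20))) n - 1) : ℝ) : ℂ) * ee (n * ξ)‖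
      ≤ eps j * N := by
  have h1 := single (P0 := PU (2 ^ j)) (P1 := PQ (2 ^ j) (2 ^ (k / 20))) (Z := 2 ^ j) (by positivity)
    (fun p hp => PU_prime hp) (fun p hp => PQ_prime hp) (PU_disj _ _) (fun p hp => PQ_gt hp)
    (AF (2 ^ j) (2 ^ (k / 20))) (fun A hA' => AF_sub hA') AF_down (AF_empty Nat.one_le_two_pow)
    j (2 ^ (j ^ 2)) (2 ^ (k / 20)) N
    (fun A hA' hc => by
      calc ∏ p ∈ A, p ≤ (2 ^ j) ^ A.card := prod_le_pow_card _ _ _ fun p hp => PU_le (hA' hp)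
        _ ≤ (2 ^ j) ^ j := Nat.pow_le_pow_right (by positivity) hc
        _ = 2 ^ (j ^ 2) := by rw [← pow_mul, sq])
    (fun A hA' => AF_le hA')
    (by
      refine le_trans ?_ hN
      rw [← pow_add, ← pow_add, ← pow_mul]
      apply Nat.pow_le_pow_right (by norm_num)
      omega) ξ
  refine h1.trans ?_
  unfold eps
  have hW := WW_ge_one (PU (2 ^ j)) (fun p hp => PU_prime hp)
  have h2 := es_small (PU (2 ^ j)) (fun p hp => PU_prime hp) j
  apply mul_le_mul_of_nonneg_right _ (by positivity)
  push_cast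
  have h3 := mul_le_mul_of_nonneg_left h2 (by linarith : 0 ≤ 4 * WW (PU (2 ^ j)))
  have e : 4 * WW (PU (2 ^ j)) * (WW (PU (2 ^ j)) ^ 16 / 16 ^ j) = 4 * WW (PU (2 ^ j)) ^ 17 / 16 ^ j := by
    ring
  linarith

theorem eps_nonneg (j : ℕ) : 0 ≤ eps j := by
  have hW := WW_ge_one (PU (2 ^ j)) (fun p hp => PU_prime hp)
  unfold eps; positivity

theorem eps_bound : ∃ C : ℝ, 0 < C ∧ ∀ j : ℕ, 1 ≤ j → eps j ≤ C * (j : ℝ) ^ 34 / 2 ^ j := by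
  refine ⟨6 * 16 ^ 2 + 4 * 16 ^ 17, by positivity, fun j hj => ?_⟩
  have hW := WW_ge_one (PU (2 ^ j)) (fun p hp => PU_prime hp)
  have hB := WW_bound j hj
  have hjr : (1 : ℝ) ≤ j := by exact_mod_cast hj
  have h1 : 6 * WW (PU (2 ^ j)) ^ 2 / 2 ^ j ≤ 6 * 16 ^ 2 * (j : ℝ) ^ 34 / 2 ^ j := by
    have a : WW (PU (2 ^ j)) ^ 2 ≤ (16 * (j : ℝ) ^ 2) ^ 2 := pow_le_pow_left₀ (by linarith) hB 2
    have b : (j : ℝ) ^ 4 ≤ (j : ℝ) ^ 34 := pow_le_pow_right₀ hjr (by norm_num)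
    have c : WW (PU (2 ^ j)) ^ 2 ≤ 16 ^ 2 * (j : ℝ) ^ 34 := by
      refine a.trans ?_
      rw [mul_pow, ← pow_mul]; gcongr
    have d : 6 * WW (PU (2 ^ j)) ^ 2 ≤ 6 * 16 ^ 2 * (j : ℝ) ^ 34 := by linarith
    gcongr
  have h2 : 4 * WW (PU (2 ^ j)) ^ 17 / 16 ^ j ≤ 4 * 16 ^ 17 * (j : ℝ) ^ 34 / 2 ^ j := by
    have a : WW (PU (2 ^ j)) ^ 17 ≤ (16 * (j : ℝ) ^ 2) ^ 17 := pow_le_pow_left₀ (by linarith) hB 17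
    rw [mul_pow, ← pow_mul] at a
    have d : 4 * WW (PU (2 ^ j)) ^ 17 ≤ 4 * 16 ^ 17 * (j : ℝ) ^ 34 := by
      norm_num at a ⊢; linarith
    have e : (2 : ℝ) ^ j ≤ 16 ^ j := pow_le_pow_left₀ (by norm_num) (by norm_num) j
    gcongr
  unfold eps
  refine (add_le_add h1 h2).trans (le_of_eq ?_)
  ring

theorem conv_split (L K : ℕ) (φ : ℕ → ℝ) (hφ : ∀ n, φ (n + L) = φ n) (f : ℤ → ℝ) (x : ℤ) :
    conv (L * K) φ f x = ∑ m ∈ range K, conv L φ f (x + L * m) := by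
  induction K with
  | zero => simp [conv]
  | succ K ih =>
    rw [sum_range_succ, ← ih]
    unfold conv
    rw [Nat.mul_succ, sum_range_add]
    congr 1
    refine sum_congr rfl fun n _ => ?_
    have h1 := mul_periodic L φ hφ K n
    rw [show L * K + n = n + K * L by ring, h1]
    congr 2
    push_cast; ring

theorem LL_telescope (j0 j : ℕ) (h : j0 ≤ j) (n : ℕ) :
    LL (PU (2 ^ j)) n = LL (PU (2 ^ j0)) n + ∑ i ∈ Ico j0 j, dd i n := by
  induction j, h using Nat.le_induction with
  | base => simp
  | succ j hj ih =>
    rw [sum_Ico_succ_top hj, ← add_assoc, ← ih]; unfold dd; ring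

theorem conv_telescope (N j0 j : ℕ) (h : j0 ≤ j) (f : ℤ → ℝ) (x : ℤ) :
    conv N (LL (PU (2 ^ j))) f x = conv N (LL (PU (2 ^ j0))) f x + ∑ i ∈ Ico j0 j, conv N (dd i) f x := by
  unfold conv
  rw [sum_comm, ← sum_add_distrib]
  refine sum_congr rfl fun n _ => ?_
  rw [LL_telescope j0 j h, add_mul, sum_mul]

end PM

namespace PM
open Finset

noncomputable def ind (F : Finset ℤ) : ℤ → ℝ := (F : Set ℤ).indicator 1

theorem ind_nonneg (F : Finset ℤ) (x : ℤ) : 0 ≤ ind F x :=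
  Set.indicator_nonneg (fun _ _ => zero_le_one) x

theorem ind_sum (F Y : Finset ℤ) : ∑ y ∈ Y, ind F y ≤ F.card := by
  classical
  have h1 : ∀ y, ind F y = if y ∈ F then 1 else 0 := by
    intro y; unfold ind; simp [Set.indicator_apply]
  simp only [h1]
  rw [sum_boole]
  exact_mod_cast card_le_card (fun y hy => (mem_filter.1 hy).2)

theorem count_a (F E : Finset ℤ) (μ : ℝ) (hμ : 0 < μ) (j0 : ℕ) (hj0 : 1 ≤ j0)
    (h : ∀ x ∈ E, ∃ k, 1 ≤ k ∧ k < 20 * j0 ^ 2 ∧ μ < MM (ind F) k x) :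
    (E.card : ℝ) ≤ 40 * j0 ^ 2 / μ * F.card := by
  have hj : (0 : ℝ) < j0 := by exact_mod_cast hj0
  obtain ⟨Y, hY⟩ := weak11 1 one_pos (ind F) (μ / (40 * j0 ^ 2)) (by positivity) E (by
    intro x hx
    obtain ⟨k, hk1, hk2, hk⟩ := h x hx
    refine ⟨2 ^ k + 1, ?_, by positivity⟩
    unfold MM at hk
    have hsub : ∑ p ∈ PQ (2 ^ (k - 1)) (2 ^ k), ind F (x + p)
        ≤ ∑ m ∈ range (2 ^ k + 1), ind F (x + (1 : ℕ) * m) := by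
      simp only [Nat.cast_one, one_mul]
      refine sum_le_sum_of_subset_of_nonneg ?_ fun _ _ _ => ind_nonneg _ _
      intro p hp
      have := PQ_le hp
      exact mem_range.2 (by omega)
    refine le_trans ?_ hsub
    set S := ∑ p ∈ PQ (2 ^ (k - 1)) (2 ^ k), ind F (x + p)
    have hkr : (0 : ℝ) < k := by exact_mod_cast hk1
    have hkr2 : (k : ℝ) ≤ 20 * j0 ^ 2 := by exact_mod_cast hk2.le
    have h2k : (1 : ℝ) ≤ 2 ^ k := one_le_pow₀ (by norm_num)
    have h1 : μ * 2 ^ k < k * S := by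
      have := mul_lt_mul_of_pos_right hk (by positivity : (0 : ℝ) < 2 ^ k)
      refine this.trans_le (le_of_eq ?_)
      field_simp
    have hS : 0 ≤ S := sum_nonneg fun _ _ => ind_nonneg _ _
    push_cast
    rw [div_mul_eq_mul_div, div_le_iff₀ (by positivity)]
    nlinarith [mul_le_mul_of_nonneg_right hkr2 hS])
  have h2 := hY.trans (ind_sum F Y)
  rw [div_mul_eq_mul_div, div_le_iff₀ (by positivity)] at h2
  rw [div_mul_eq_mul_div, le_div_iff₀ hμ]
  linarith

theorem count_b1 (F E : Finset ℤ) (t : ℝ) (ht : 0 < t) (j0 : ℕ) (hj0 : 1 ≤ j0)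
    (h : ∀ x ∈ E, ∃ N : ℕ, 0 < N ∧ t * N ≤ conv N (LL (PU (2 ^ j0))) (ind F) x) :
    (E.card : ℝ) ≤ 16 * j0 ^ 2 / t * F.card := by
  have hj : (0 : ℝ) < j0 := by exact_mod_cast hj0
  obtain ⟨Y, hY⟩ := weak11 1 one_pos (ind F) (t / (16 * j0 ^ 2)) (by positivity) E (by
    intro x hx
    obtain ⟨N, hN, hc⟩ := h x hx
    refine ⟨N, ?_, hN⟩
    have h1 : conv N (LL (PU (2 ^ j0))) (ind F) x
        ≤ 16 * j0 ^ 2 * ∑ m ∈ range N, ind F (x + (1 : ℕ) * m) := by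
      unfold conv
      rw [mul_sum]
      refine sum_le_sum fun n _ => ?_
      simp only [Nat.cast_one, one_mul]
      exact mul_le_mul_of_nonneg_right ((LL_le _ _).trans (WW_bound j0 hj0)) (ind_nonneg _ _)
    rw [div_mul_eq_mul_div, div_le_iff₀ (by positivity)]
    linarith)
  have h2 := hY.trans (ind_sum F Y)
  rw [div_mul_eq_mul_div, div_le_iff₀ (by positivity)] at h2
  rw [div_mul_eq_mul_div, le_div_iff₀ ht]
  linarith

theorem count_b2 (F E : Finset ℤ) (t : ℝ) (ht : 0 < t) (j k N : ℕ) (hjk : 20 * j ^ 2 ≤ k)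
    (hN : 2 ^ k ≤ N)
    (h : ∀ x ∈ E, t * N ≤ conv N (fun n => LL (PU (2 ^ j)) n *
      (gg (AF (2 ^ j) (2 ^ (k / 20))) n - 1)) (ind F) x) :
    (E.card : ℝ) ≤ eps j ^ 2 / t ^ 2 * F.card := by
  have hN0 : 0 < N := lt_of_lt_of_le (by positivity) hN
  have hNr : (0 : ℝ) < N := by exact_mod_cast hN0
  have h1 := l2_bound N (fun n => LL (PU (2 ^ j)) n * (gg (AF (2 ^ j) (2 ^ (k / 20))) n - 1))
    (eps j * N) (scale_trig j k N hjk hN) F E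
  have h2 : (E.card : ℝ) * (t * N) ^ 2 ≤ (eps j * N) ^ 2 * F.card := by
    refine le_trans ?_ h1
    rw [← nsmul_eq_mul]
    apply card_nsmul_le_sum
    intro x hx
    exact pow_le_pow_left₀ (by positivity) (h x hx) 2
  rw [div_mul_eq_mul_div, le_div_iff₀ (by positivity)]
  have h3 : (E.card : ℝ) * t ^ 2 * N ^ 2 ≤ eps j ^ 2 * F.card * N ^ 2 := by nlinarith
  exact le_of_mul_le_mul_right h3 (by positivity)

theorem count_b3 (F E : Finset ℤ) (t : ℝ) (ht : 0 < t) (i : ℕ)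
    (h : ∀ x ∈ E, ∃ N : ℕ, 0 < N ∧ Lp (i + 1) ∣ N ∧ t * N ≤ conv N (dd i) (ind F) x) :
    (E.card : ℝ) ≤ eps i ^ 2 / t ^ 2 * F.card := by
  have hL := Lp_pos (i + 1)
  have hLr : (0 : ℝ) < Lp (i + 1) := by exact_mod_cast hL
  obtain ⟨Y, hY⟩ := weak22 (Lp (i + 1)) hL (conv (Lp (i + 1)) (dd i) (ind F)) (t * Lp (i + 1))
    (by positivity) E (by
    intro x hx
    obtain ⟨N, hN, ⟨K, rfl⟩, hc⟩ := h x hx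
    refine ⟨K, ?_, Nat.pos_of_ne_zero (by rintro rfl; simp at hN)⟩
    rw [conv_split _ _ _ (dd_shift i)] at hc
    push_cast at hc
    rw [mul_assoc]; exact hc)
  have h1 := l2_bound (Lp (i + 1)) (dd i) (eps i * Lp (i + 1)) (tower_trig i) F Y
  have h2 := hY.trans h1
  rw [div_mul_eq_mul_div, le_div_iff₀ (by positivity)]
  have h3 : (E.card : ℝ) * t ^ 2 * (Lp (i + 1) : ℝ) ^ 2 ≤ eps i ^ 2 * F.card * (Lp (i + 1) : ℝ) ^ 2 := by
    nlinarith
  exact le_of_mul_le_mul_right h3 (by positivity)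

theorem sq_le_two_pow (j : ℕ) : j ^ 2 ≤ 2 * 2 ^ j := by
  have key : ∀ m, 3 ≤ m → m ^ 2 ≤ 2 * 2 ^ m := by
    intro m hm
    induction m, hm using Nat.le_induction with
    | base => norm_num
    | succ m hm ih => rw [pow_succ 2 m]; nlinarith
  rcases Nat.lt_or_ge j 3 with h | h
  · interval_cases j <;> norm_num
  · exact key j h

def Lq (j0 j : ℕ) : ℕ := if j ≤ j0 then 1 else Lp j
def NN (j0 j k : ℕ) : ℕ := Lq j0 j * (2 ^ k / Lq j0 j + 1)

theorem Lq_pos (j0 j : ℕ) : 0 < Lq j0 j := by unfold Lq; split_ifs; exacts [one_pos, Lp_pos j]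

theorem NN_gt (j0 j k : ℕ) : 2 ^ k < NN j0 j k := by
  unfold NN; exact Nat.lt_mul_div_succ _ (Lq_pos j0 j)

theorem NN_le (j0 j k : ℕ) (h : Lq j0 j ≤ 2 ^ k) : NN j0 j k ≤ 2 * 2 ^ k := by
  unfold NN
  have := Nat.mul_div_le (2 ^ k) (Lq j0 j)
  rw [Nat.mul_succ]; omega

theorem tele_sum (a b : ℕ) : ∑ i ∈ Ico a b, (1 : ℝ) / ((i + 1) * (i + 2)) ≤ 1 := by
  have key : ∀ n : ℕ, ∑ i ∈ range n, (1 : ℝ) / ((i + 1) * (i + 2)) = 1 - 1 / (n + 1) := by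
    intro n
    induction n with
    | zero => simp
    | succ n ih => rw [sum_range_succ, ih]; push_cast; field_simp; ring
  have h1 : ∑ i ∈ Ico a b, (1 : ℝ) / ((i + 1) * (i + 2)) ≤ ∑ i ∈ range b, (1 : ℝ) / ((i + 1) * (i + 2)) := by
    refine sum_le_sum_of_subset_of_nonneg ?_ fun i _ _ => by positivity
    intro i hi; exact mem_range.2 (mem_Ico.1 hi).2
  rw [key] at h1
  have : (0 : ℝ) ≤ 1 / (b + 1) := by positivity
  linarith

theorem decompose (F : Finset ℤ) (μ : ℝ) (hμ : 0 < μ) (j0 : ℕ) (hj0 : 1 ≤ j0) (k : ℕ)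
    (hk : 20 * j0 ^ 2 ≤ k) (x : ℤ) (hx : μ < MM (ind F) k x) :
    (∃ N : ℕ, 0 < N ∧ μ / 720 * N ≤ conv N (LL (PU (2 ^ j0))) (ind F) x) ∨
    (∃ j, j0 ≤ j ∧ k < 40 * 2 ^ (j + 1) ∧ 20 * j ^ 2 ≤ k ∧
      μ / 720 * NN j0 j k ≤ conv (NN j0 j k) (fun n => LL (PU (2 ^ j)) n *
      (gg (AF (2 ^ j) (2 ^ (k / 20))) n - 1)) (ind F) x) ∨
    (∃ i, j0 ≤ i ∧ ∃ N : ℕ, 0 < N ∧ Lp (i + 1) ∣ N ∧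
      μ / 720 * (1 / ((i + 1) * (i + 2))) * N ≤ conv N (dd i) (ind F) x) := by
  obtain ⟨j, hj, hjk, hj20, hL, hdiv⟩ : ∃ j, j0 ≤ j ∧ k < 40 * 2 ^ (j + 1) ∧ 20 * j ^ 2 ≤ k ∧
      Lq j0 j ≤ 2 ^ k ∧ ∀ i ∈ Ico j0 j, Lp (i + 1) ∣ NN j0 j k := by
    by_cases h : k < 40 * 2 ^ (j0 + 1)
    · refine ⟨j0, le_rfl, h, hk, ?_, by simp⟩
      unfold Lq; simp [Nat.one_le_two_pow]
    · push Not at h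
      have h1 : 2 ^ (j0 + 1) ≤ k / 40 := (Nat.le_div_iff_mul_le (by norm_num)).2 (by omega)
      have h0 : k / 40 ≠ 0 := by
        have : 0 < 2 ^ (j0 + 1) := by positivity
        omega
      have h2 := (Nat.le_log_iff_pow_le (by norm_num) h0).2 h1
      have h3 : 2 ^ Nat.log 2 (k / 40) ≤ k / 40 := Nat.pow_log_le_self 2 h0
      have h4 : k / 40 < 2 ^ (Nat.log 2 (k / 40) + 1) := Nat.lt_pow_succ_log_self (by norm_num) _
      set j := Nat.log 2 (k / 40)
      have h5 := sq_le_two_pow j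
      have hLq : Lq j0 j = Lp j := by unfold Lq; rw [if_neg (by omega)]
      refine ⟨j, by omega, by omega, by omega, ?_, ?_⟩
      · rw [hLq]
        refine (Lp_le j).trans (Nat.pow_le_pow_right (by norm_num) (by omega))
      · intro i hi
        rw [mem_Ico] at hi
        unfold NN
        rw [hLq]
        exact dvd_mul_of_dvd_left (Lp_dvd (by omega)) _
  set N := NN j0 j k with hNdef
  have hNgt : 2 ^ k < N := NN_gt j0 j k
  have hNle : N ≤ 2 * 2 ^ k := NN_le j0 j k hL
  have hN0 : 0 < N := by omega
  have hNr : (0 : ℝ) < N := by exact_mod_cast hN0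
  have hNr2 : (N : ℝ) ≤ 2 * 2 ^ k := by exact_mod_cast hNle
  have hj2 : j ≤ j ^ 2 := Nat.le_self_pow (by norm_num) j
  have hk20 : 20 ≤ k := by nlinarith
  set G := gg (AF (2 ^ j) (2 ^ (k / 20))) with hG
  have hGn : ∀ n, 0 ≤ G n := gg_nonneg (P := PQ (2 ^ j) (2 ^ (k / 20))) (fun p hp => PQ_prime hp) _
    (fun A hA' => AF_sub hA') (AF_empty Nat.one_le_two_pow)
  have h1 : k * ∑ p ∈ PQ (2 ^ (k - 1)) (2 ^ k), ind F (x + p)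
      ≤ 120 * conv N (fun n => LL (PU (2 ^ j)) n * G n) (ind F) x := by
    unfold conv
    rw [mul_sum, mul_sum]
    refine (sum_le_sum (g := fun n : ℕ => 120 * (LL (PU (2 ^ j)) n * G n * ind F (x + n))) ?_).trans
      (sum_le_sum_of_subset_of_nonneg ?_ ?_)
    · intro n hn
      have := mul_le_mul_of_nonneg_right (prime_dom j k n hk20 (by omega) hn) (ind_nonneg F (x + n))
      refine this.trans (le_of_eq ?_)
      ring
    · intro p hp
      have := PQ_le hp
      exact mem_range.2 (by omega)
    · intro n _ _
      have := mul_nonneg (mul_nonneg (LL_nonneg (2 ^ j) n) (hGn n)) (ind_nonneg F (x + n))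
      linarith
  have h2 : μ / 240 * N < conv N (fun n => LL (PU (2 ^ j)) n * G n) (ind F) x := by
    unfold MM at hx
    have := mul_lt_mul_of_pos_right hx (by positivity : (0 : ℝ) < 2 ^ k)
    have e : (k : ℝ) / 2 ^ k * (∑ p ∈ PQ (2 ^ (k - 1)) (2 ^ k), ind F (x + p)) * 2 ^ k
      = k * ∑ p ∈ PQ (2 ^ (k - 1)) (2 ^ k), ind F (x + p) := by field_simp
    rw [e] at this
    nlinarith
  have h3 : conv N (fun n => LL (PU (2 ^ j)) n * G n) (ind F) x
      = conv N (LL (PU (2 ^ j0))) (ind F) x + ∑ i ∈ Ico j0 j, conv N (dd i) (ind F) x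
        + conv N (fun n => LL (PU (2 ^ j)) n * (G n - 1)) (ind F) x := by
    rw [← conv_telescope N j0 j hj]
    unfold conv
    rw [← sum_add_distrib]
    exact sum_congr rfl fun n _ => by ring
  by_contra hcon
  push Not at hcon
  obtain ⟨c1, c2, c3⟩ := hcon
  have d1 := c1 N hN0
  have d2 := c2 j hj hjk hj20
  have d3 : ∑ i ∈ Ico j0 j, conv N (dd i) (ind F) x
      ≤ ∑ i ∈ Ico j0 j, μ / 720 * N * ((1 : ℝ) / ((i + 1) * (i + 2))) := by
    refine sum_le_sum fun i hi => ?_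
    have := c3 i (mem_Ico.1 hi).1 N hN0 (hdiv i hi)
    refine this.le.trans (le_of_eq ?_)
    ring
  rw [← mul_sum] at d3
  have d4 := mul_le_mul_of_nonneg_left (tele_sum j0 j) (by positivity : 0 ≤ μ / 720 * (N : ℝ))
  rw [h3] at h2
  linarith

theorem polygeo (d : ℕ) : ∃ C : ℝ, 0 < C ∧ ∀ j : ℕ, (j : ℝ) ^ d * (2 / 3) ^ j ≤ C := by
  have h := tendsto_pow_const_mul_const_pow_of_abs_lt_one d (r := (2 / 3 : ℝ))
    (by rw [abs_of_pos (by norm_num)]; norm_num)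
  obtain ⟨C, hC⟩ := h.bddAbove_range
  refine ⟨max C 1, by positivity, fun j => ?_⟩
  exact (hC ⟨j, rfl⟩).trans (le_max_left _ _)

theorem eps_sq_sum : ∃ C : ℝ, 0 < C ∧ ∀ j : ℕ, 1 ≤ j →
    80 * 2 ^ j * eps j ^ 2 + (((j : ℝ) + 1) * (j + 2)) ^ 2 * eps j ^ 2 ≤ C * (3 / 4) ^ j := by
  obtain ⟨C1, hC1, h1⟩ := eps_bound
  obtain ⟨C2, hC2, h2⟩ := polygeo 72
  refine ⟨116 * C1 ^ 2 * C2, by positivity, fun j hj => ?_⟩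
  have hjr : (1 : ℝ) ≤ j := by exact_mod_cast hj
  have a1 : eps j ^ 2 ≤ (C1 * (j : ℝ) ^ 34 / 2 ^ j) ^ 2 := pow_le_pow_left₀ (eps_nonneg j) (h1 j hj) 2
  have a2 : (((j : ℝ) + 1) * (j + 2)) ^ 2 ≤ 36 * (j : ℝ) ^ 4 := by
    have : ((j : ℝ) + 1) * (j + 2) ≤ 6 * (j : ℝ) ^ 2 := by nlinarith
    refine (pow_le_pow_left₀ (by positivity) this 2).trans (le_of_eq ?_)
    ring
  have a3 : 80 * 2 ^ j + (((j : ℝ) + 1) * (j + 2)) ^ 2 ≤ 116 * (2 ^ j * (j : ℝ) ^ 4) := by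
    have b1 : (1 : ℝ) ≤ 2 ^ j := one_le_pow₀ (by norm_num)
    have b2 : (1 : ℝ) ≤ (j : ℝ) ^ 4 := one_le_pow₀ hjr
    nlinarith
  have e0 : (2 / 3 : ℝ) ^ j * (3 / 4) ^ j = 1 / 2 ^ j := by
    rw [← mul_pow, one_div, ← inv_pow]; norm_num
  calc 80 * 2 ^ j * eps j ^ 2 + (((j : ℝ) + 1) * (j + 2)) ^ 2 * eps j ^ 2
      = (80 * 2 ^ j + (((j : ℝ) + 1) * (j + 2)) ^ 2) * eps j ^ 2 := by ring
    _ ≤ 116 * (2 ^ j * (j : ℝ) ^ 4) * (C1 * (j : ℝ) ^ 34 / 2 ^ j) ^ 2 := by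
        apply mul_le_mul a3 a1 (by positivity) (by positivity)
    _ = 116 * C1 ^ 2 * ((j : ℝ) ^ 72 * (1 / 2 ^ j)) := by field_simp
    _ = 116 * C1 ^ 2 * ((j : ℝ) ^ 72 * (2 / 3) ^ j) * (3 / 4) ^ j := by rw [← e0]; ring
    _ ≤ 116 * C1 ^ 2 * C2 * (3 / 4) ^ j := by
        have := h2 j
        gcongr

theorem geo_tail (a b : ℕ) : ∑ j ∈ Ico a b, (3 / 4 : ℝ) ^ j ≤ 4 * (3 / 4) ^ a := by
  rcases le_total a b with h | h
  · have key : ∑ j ∈ Ico a b, (3 / 4 : ℝ) ^ j = 4 * (3 / 4) ^ a - 4 * (3 / 4) ^ b := by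
      induction b, h using Nat.le_induction with
      | base => simp
      | succ b hb ih => rw [sum_Ico_succ_top hb, ih, pow_succ]; ring
    rw [key]
    have : (0 : ℝ) ≤ 4 * (3 / 4) ^ b := by positivity
    linarith
  · rw [Ico_eq_empty_of_le h, sum_empty]; positivity

end PM

namespace PM
open Finset

theorem main_count (C : ℝ) (hC : ∀ j : ℕ, 1 ≤ j →
      80 * 2 ^ j * eps j ^ 2 + (((j : ℝ) + 1) * (j + 2)) ^ 2 * eps j ^ 2 ≤ C * (3 / 4) ^ j)
    (hC0 : 0 < C) (F E : Finset ℤ) (μ : ℝ) (hμ : 0 < μ) (j0 : ℕ) (hj0 : 1 ≤ j0)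
    (h : ∀ x ∈ E, ∃ k, 1 ≤ k ∧ μ < MM (ind F) k x) :
    (E.card : ℝ) ≤ (40 * j0 ^ 2 / μ + 16 * j0 ^ 2 / (μ / 720)
      + 4 * C * (3 / 4) ^ j0 / (μ / 720) ^ 2) * F.card := by
  classical
  set t := μ / 720 with ht
  have ht0 : 0 < t := by positivity
  set A : ℤ → Prop := fun x => ∃ k, 1 ≤ k ∧ k < 20 * j0 ^ 2 ∧ μ < MM (ind F) k x with hA
  set B1 : ℤ → Prop := fun x => ∃ N : ℕ, 0 < N ∧ t * N ≤ conv N (LL (PU (2 ^ j0))) (ind F) x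
    with hB1
  set B2 : ℕ → ℕ → ℤ → Prop := fun j k x => 20 * j ^ 2 ≤ k ∧
      t * NN j0 j k ≤ conv (NN j0 j k) (fun n => LL (PU (2 ^ j)) n *
      (gg (AF (2 ^ j) (2 ^ (k / 20))) n - 1)) (ind F) x with hB2
  set B3 : ℕ → ℤ → Prop := fun i x => ∃ N : ℕ, 0 < N ∧ Lp (i + 1) ∣ N ∧
      t * (1 / ((i + 1) * (i + 2))) * N ≤ conv N (dd i) (ind F) x with hB3
  have key : ∀ x, ∃ m, x ∈ E → A x ∨ B1 x ∨
      (j0 ≤ m ∧ ((∃ k, k < 40 * 2 ^ (m + 1) ∧ B2 m k x) ∨ B3 m x)) := by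
    intro x
    by_cases hx : x ∈ E
    · obtain ⟨k, hk1, hk⟩ := h x hx
      by_cases hk2 : k < 20 * j0 ^ 2
      · exact ⟨0, fun _ => Or.inl ⟨k, hk1, hk2, hk⟩⟩
      · push Not at hk2
        rcases decompose F μ hμ j0 hj0 k hk2 x hk with h1 | ⟨j, a, b, c, d⟩ | ⟨i, a, b⟩
        · exact ⟨0, fun _ => Or.inr (Or.inl h1)⟩
        · exact ⟨j, fun _ => Or.inr (Or.inr ⟨a, Or.inl ⟨k, b, c, d⟩⟩)⟩
        · exact ⟨i, fun _ => Or.inr (Or.inr ⟨a, Or.inr b⟩)⟩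
    · exact ⟨0, fun h => absurd h hx⟩
  choose g hg using key
  set J := E.sup g + 1 with hJ
  have hsub : E ⊆ (E.filter A ∪ E.filter B1) ∪ (Ico j0 J).biUnion fun j =>
      ((range (40 * 2 ^ (j + 1))).biUnion fun k => E.filter (B2 j k)) ∪ E.filter (B3 j) := by
    intro x hx
    have hgJ : g x < J := Nat.lt_succ_of_le (Finset.le_sup hx)
    simp only [mem_union, mem_filter, mem_biUnion, mem_Ico, mem_range]
    rcases hg x hx with h1 | h1 | ⟨hm, ⟨k, hk, h1⟩ | h1⟩
    · exact Or.inl (Or.inl ⟨hx, h1⟩)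
    · exact Or.inl (Or.inr ⟨hx, h1⟩)
    · exact Or.inr ⟨g x, ⟨hm, hgJ⟩, Or.inl ⟨k, hk, hx, h1⟩⟩
    · exact Or.inr ⟨g x, ⟨hm, hgJ⟩, Or.inr ⟨hx, h1⟩⟩
  have hF : (0 : ℝ) ≤ F.card := Nat.cast_nonneg _
  have c1 : ((E.filter A).card : ℝ) ≤ 40 * j0 ^ 2 / μ * F.card :=
    count_a F _ μ hμ j0 hj0 fun x hx => (mem_filter.1 hx).2
  have c2 : ((E.filter B1).card : ℝ) ≤ 16 * j0 ^ 2 / t * F.card :=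
    count_b1 F _ t ht0 j0 hj0 fun x hx => (mem_filter.1 hx).2
  have c3 : ∀ j k, ((E.filter (B2 j k)).card : ℝ) ≤ eps j ^ 2 / t ^ 2 * F.card := by
    intro j k
    by_cases hjk : 20 * j ^ 2 ≤ k
    · exact count_b2 F _ t ht0 j k (NN j0 j k) hjk (NN_gt j0 j k).le
        fun x hx => (mem_filter.1 hx).2.2
    · have : E.filter (B2 j k) = ∅ := filter_eq_empty_iff.2 fun x _ hx => hjk hx.1
      rw [this, card_empty, Nat.cast_zero]
      positivity
  have c4 : ∀ j : ℕ, ((E.filter (B3 j)).card : ℝ)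
      ≤ (((j : ℝ) + 1) * (j + 2)) ^ 2 * eps j ^ 2 / t ^ 2 * F.card := by
    intro j
    have := count_b3 F (E.filter (B3 j)) (t * (1 / (((j : ℝ) + 1) * (j + 2)))) (by positivity) j
      fun x hx => (mem_filter.1 hx).2
    refine this.trans (le_of_eq ?_)
    have : ((j : ℝ) + 1) * (j + 2) ≠ 0 := by positivity
    congr 1
    field_simp
  have c5 : ∀ j ∈ Ico j0 J, (((((range (40 * 2 ^ (j + 1))).biUnion fun k => E.filter (B2 j k)) ∪
      E.filter (B3 j)).card : ℕ) : ℝ) ≤ C / t ^ 2 * F.card * (3 / 4) ^ j := by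
    intro j hj
    have a1 : ((((range (40 * 2 ^ (j + 1))).biUnion fun k => E.filter (B2 j k)).card : ℕ) : ℝ) ≤
        80 * 2 ^ j * (eps j ^ 2 / t ^ 2 * F.card) := by
      calc _ ≤ ((∑ k ∈ range (40 * 2 ^ (j + 1)), (E.filter (B2 j k)).card : ℕ) : ℝ) := by
            exact_mod_cast card_biUnion_le
        _ ≤ ∑ k ∈ range (40 * 2 ^ (j + 1)), (eps j ^ 2 / t ^ 2 * F.card) := by
            push_cast
            exact sum_le_sum fun k _ => c3 j k
        _ = _ := by
            rw [sum_const, card_range, nsmul_eq_mul]; push_cast; ring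
    have a2 := c4 j
    have a3 := hC j (hj0.trans (mem_Ico.1 hj).1)
    have a4 : (((((range (40 * 2 ^ (j + 1))).biUnion fun k => E.filter (B2 j k)) ∪
      E.filter (B3 j)).card : ℕ) : ℝ) ≤
      ((((range (40 * 2 ^ (j + 1))).biUnion fun k => E.filter (B2 j k)).card : ℕ) : ℝ) +
      (E.filter (B3 j)).card := by exact_mod_cast card_union_le _ _
    have a5 := mul_le_mul_of_nonneg_right a3 (show (0 : ℝ) ≤ 1 / t ^ 2 * F.card by positivity)
    calc _ ≤ _ := a4
      _ ≤ _ := add_le_add a1 a2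
      _ = (80 * 2 ^ j * eps j ^ 2 + (((j : ℝ) + 1) * (j + 2)) ^ 2 * eps j ^ 2) *
          (1 / t ^ 2 * F.card) := by ring
      _ ≤ _ := a5
      _ = _ := by ring
  have c6 : (((Ico j0 J).biUnion fun j => ((range (40 * 2 ^ (j + 1))).biUnion fun k =>
      E.filter (B2 j k)) ∪ E.filter (B3 j)).card : ℝ) ≤ C / t ^ 2 * F.card * (4 * (3 / 4) ^ j0) := by
    calc _ ≤ ((∑ j ∈ Ico j0 J, (((range (40 * 2 ^ (j + 1))).biUnion fun k =>
          E.filter (B2 j k)) ∪ E.filter (B3 j)).card : ℕ) : ℝ) := by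
          exact_mod_cast card_biUnion_le
      _ ≤ ∑ j ∈ Ico j0 J, C / t ^ 2 * F.card * (3 / 4) ^ j := by
          rw [Nat.cast_sum]
          exact sum_le_sum c5
      _ = C / t ^ 2 * F.card * ∑ j ∈ Ico j0 J, (3 / 4) ^ j := by rw [mul_sum]
      _ ≤ _ := mul_le_mul_of_nonneg_left (geo_tail _ _) (by positivity)
  have d1 : (E.card : ℝ) ≤ ((E.filter A).card + (E.filter B1).card) +
      ((Ico j0 J).biUnion fun j => ((range (40 * 2 ^ (j + 1))).biUnion fun k =>
      E.filter (B2 j k)) ∪ E.filter (B3 j)).card := by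
    have := (card_le_card hsub).trans ((card_union_le _ _).trans
      (Nat.add_le_add_right (card_union_le _ _) _))
    exact_mod_cast this
  calc _ ≤ _ := d1
    _ ≤ _ := add_le_add (add_le_add c1 c2) c6
    _ = _ := by ring

theorem final_bound : ∃ C : ℝ, 0 < C ∧ ∀ (F E : Finset ℤ) (l : ℝ), 0 < l → l < 1 →
    (∀ x ∈ E, ∃ N : ℕ, 2 ≤ N ∧ l < ((PU N).card : ℝ)⁻¹ * ∑ p ∈ PU N, ind F (x + p)) →
    (E.card : ℝ) ≤ C * l⁻¹ * (Real.log (Real.exp 1 / l)) ^ 2 * F.card := by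
  obtain ⟨C, hC0, hC⟩ := eps_sq_sum
  refine ⟨16 * (40 * 64 + 16 * 64 * 720) + 4 * C * (64 * 720) ^ 2, by positivity, ?_⟩
  intro F E l hl hl1 h
  set L := Real.log (Real.exp 1 / l) with hL
  have hLe : L = 1 - Real.log l := by
    rw [hL, Real.log_div (Real.exp_ne_zero _) hl.ne', Real.log_exp]
  have hlog : Real.log l < 0 := Real.log_neg hl hl1
  have hL1 : 1 ≤ L := by linarith
  set j0 := ⌈4 * (-Real.log l)⌉₊ + 1 with hj
  have hj1 : 4 * (-Real.log l) ≤ j0 := by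
    have := Nat.le_ceil (4 * (-Real.log l))
    rw [hj]; push_cast; linarith
  have hj2 : (j0 : ℝ) ≤ 4 * L := by
    have := Nat.ceil_lt_add_one (show 0 ≤ 4 * (-Real.log l) by linarith)
    rw [hj]; push_cast; linarith
  have hp : (3 / 4 : ℝ) ^ j0 ≤ l := by
    rw [← Real.log_le_log_iff (by positivity) hl, Real.log_pow]
    have := Real.log_le_sub_one_of_pos (show (0 : ℝ) < 3 / 4 by norm_num)
    have h0 : (0 : ℝ) ≤ j0 := Nat.cast_nonneg _
    nlinarith
  have hm := main_count C hC hC0 F E (l / 64) (by positivity) j0 (by omega) (by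
    intro x hx
    obtain ⟨N, hN, hlt⟩ := h x hx
    by_contra hcon
    push Not at hcon
    have := reduce_dyadic (ind F) (ind_nonneg F) x (l / 64) (by positivity) hcon N hN
    linarith)
  refine hm.trans (mul_le_mul_of_nonneg_right ?_ (Nat.cast_nonneg _))
  have hjs : (j0 : ℝ) ^ 2 ≤ 16 * L ^ 2 := by
    have := pow_le_pow_left₀ (Nat.cast_nonneg j0) hj2 2
    linarith [mul_pow 4 L 2]
  have hLs : 1 ≤ L ^ 2 := one_le_pow₀ hL1
  have hi : 0 < l⁻¹ := inv_pos.2 hl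
  calc 40 * (j0 : ℝ) ^ 2 / (l / 64) + 16 * j0 ^ 2 / (l / 64 / 720)
      + 4 * C * (3 / 4) ^ j0 / (l / 64 / 720) ^ 2
      = (40 * 64 + 16 * 64 * 720) * l⁻¹ * (j0 : ℝ) ^ 2
        + 4 * C * (64 * 720) ^ 2 * l⁻¹ ^ 2 * (3 / 4) ^ j0 := by
        field_simp
    _ ≤ (40 * 64 + 16 * 64 * 720) * l⁻¹ * (16 * L ^ 2)
        + 4 * C * (64 * 720) ^ 2 * l⁻¹ ^ 2 * l := by gcongr
    _ = (40 * 64 + 16 * 64 * 720) * l⁻¹ * (16 * L ^ 2)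
        + 4 * C * (64 * 720) ^ 2 * l⁻¹ * 1 := by
        field_simp
    _ ≤ (40 * 64 + 16 * 64 * 720) * l⁻¹ * (16 * L ^ 2)
        + 4 * C * (64 * 720) ^ 2 * l⁻¹ * L ^ 2 := by gcongr
    _ = _ := by ring

end PM

/-- Restricted weak type `(1,1)` inequality with logarithmic loss for the maximal function
of the averages along the primes: for a finite `F ⊆ ℤ` and `0 < λ < 1`,
`#{x : sup_{N ≥ 2} 𝒜_N(𝟙_F)(x) > λ} ≤ C λ⁻¹ log²(e/λ) #F`. -/
theorem stmt_4 :
    ∃ C : ℝ, 0 < C ∧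
      ∀ (F : Finset ℤ) (l : ℝ), 0 < l → l < 1 →
        {x : ℤ | ∃ N : ℕ, 2 ≤ N ∧ l < primeAvg ((F : Set ℤ).indicator 1) N x}.Finite ∧
        ({x : ℤ | ∃ N : ℕ, 2 ≤ N ∧ l < primeAvg ((F : Set ℤ).indicator 1) N x}.ncard : ℝ) ≤
          C * l⁻¹ * (Real.log (Real.exp 1 / l)) ^ 2 * F.card := by
  obtain ⟨C, hC, hb⟩ := PM.final_bound
  refine ⟨C, hC, ?_⟩
  intro F l hl hl1
  set S := {x : ℤ | ∃ N : ℕ, 2 ≤ N ∧ l < primeAvg ((F : Set ℤ).indicator 1) N x} with hS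
  have hE : ∀ E : Finset ℤ, (E : Set ℤ) ⊆ S →
      (E.card : ℝ) ≤ C * l⁻¹ * (Real.log (Real.exp 1 / l)) ^ 2 * F.card :=
    fun E h => hb F E l hl hl1 fun x hx => h hx
  have hfin : S.Finite := by
    by_contra hinf
    obtain ⟨n, hn⟩ := exists_nat_gt (C * l⁻¹ * (Real.log (Real.exp 1 / l)) ^ 2 * F.card)
    obtain ⟨E, hES, hc⟩ := Set.Infinite.exists_subset_card_eq hinf n
    have := hE E hES
    rw [hc] at this
    linarith
  refine ⟨hfin, ?_⟩
  rw [Set.ncard_eq_toFinset_card S hfin]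
  exact hE _ (by simp)
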